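/- Let H be a complex Hilbert space, J a signature operator on H, L a densely defined positive self-adjoint operator in H, and B := JL, and assume B is similar to a self-adjoint operator in H. Let f : [0, ∞) → H satisfy: (a) for each x₁ > 0 there exist K > 0 and k ∈ (0, 1] with ‖f(x) − f(y)‖ ≤ K |x − y|^k for all 0 ≤ x, y ≤ x₁, and (b) ∫₀^∞ ‖f(x)‖ dx < ∞. Then for every φ₊ ∈ H₊ there exists a unique function ψ : [0, ∞) → H which is continuous on [0, ∞), continuously differentiable on (0, ∞), satisfies ψ(x) ∈ dom B and ψ′(x) = −Bψ(x) + f(x) for all x > 0, satisfies P₊ψ(0) = φ₊, and is bounded: sup_{x ≥ 0} ‖ψ(x)‖ < ∞. -/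

import Mathlib

open scoped ComplexOrder InnerProductSpace

noncomputable section

variable {H : Type*} [NormedAddCommGroup H] [InnerProductSpace ℂ H] [CompleteSpace H]

/-- `J` is a signature operator: `J = J* = J⁻¹`. -/
def IsSignatureOperator (J : H →L[ℂ] H) : Prop :=
  IsSelfAdjoint J ∧ J.comp J = ContinuousLinearMap.id ℂ H

/-- The orthogonal projection onto `H₊ = ker (J - I)`, which equals `(I + J)/2`
for a signature operator `J`. -/
def Pplus (J : H →L[ℂ] H) : H →L[ℂ] H := (2⁻¹ : ℂ) • (ContinuousLinearMap.id ℂ H + J)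

/-- The orthogonal projection onto `H₋ = ker (J + I)`, which equals `(I - J)/2`
for a signature operator `J`. -/
def Pminus (J : H →L[ℂ] H) : H →L[ℂ] H := (2⁻¹ : ℂ) • (ContinuousLinearMap.id ℂ H - J)

/-- The composition `J ∘ L` of a bounded operator `J` with an unbounded operator `L`,
as an unbounded operator with the same domain as `L`. -/
def pmapComp (J : H →L[ℂ] H) (L : H →ₗ.[ℂ] H) : H →ₗ.[ℂ] H :=
  { domain := L.domain
    toFun := (J : H →ₗ[ℂ] H).comp L.toFun }

/-- `L` is a positive operator: `⟨L h, h⟩ > 0` for every nonzero `h ∈ dom L`. -/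
def IsPositivePMap (L : H →ₗ.[ℂ] H) : Prop :=
  ∀ h : L.domain, (h : H) ≠ 0 → 0 < ⟪L h, (h : H)⟫_ℂ

/-- `B` is similar to a self-adjoint operator: there is a bounded operator `S` with bounded
inverse mapping `dom B` onto the domain of a self-adjoint operator `A` such that
`A (S h) = S (B h)` for all `h ∈ dom B`. -/
def SimilarToSelfAdjoint (B : H →ₗ.[ℂ] H) : Prop :=
  ∃ (S : H ≃L[ℂ] H) (A : H →ₗ.[ℂ] H), IsSelfAdjoint A ∧
    (A.domain : Set H) = (fun h => S h) '' (B.domain : Set H) ∧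
    ∀ (h : B.domain) (hSh : S (h : H) ∈ A.domain), A ⟨S (h : H), hSh⟩ = S (B h)

/-- `ψ` solves `ψ' = -B ψ + f` on the set `s` with a continuous derivative:
on `s`, `ψ` takes values in `dom B`, is differentiable with derivative `ψ'`,
`ψ'` is continuous on `s`, and `ψ' x = -B (ψ x) + f x`. -/
def IsStrongSolutionOn (B : H →ₗ.[ℂ] H) (f : ℝ → H) (ψ : ℝ → H) (s : Set ℝ) : Prop :=
  ∃ ψ' : ℝ → H, ContinuousOn ψ' s ∧
    ∀ x ∈ s, HasDerivAt ψ (ψ' x) x ∧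
      ∃ hx : ψ x ∈ B.domain, ψ' x = -(B ⟨ψ x, hx⟩) + f x

open MeasureTheory

/-!
The equation and the boundary condition are stable under similarity, so `B` may be replaced by a
self-adjoint operator `A`, which has a bounded analytic semigroup `U t = exp (-t |A|)` and the
spectral projection `Q` of `(0, ∞)`. On the range of `Q` the equation `ψ' = -A ψ + f` is solved
forwards by Duhamel's formula and on its kernel backwards from infinity; integrability of `f` bounds
both integrals and Hölder continuity makes the first one differentiable. Conversely a bounded
solution of the homogeneous equation is `U x k` with `k` in the range of `Q`.

So the boundary condition `P₊ ψ 0 = φ₊` becomes an equation for the operator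
`V = P₊ Q + P₋ (1 - Q) = (1 + J (2 Q - 1)) / 2`, and everything rests on `V` being invertible. This
follows from the accretivity of `J (2 Q - 1)`, where `2 Q - 1` is the sign of `B`: since `L = J B`
is nonnegative, `⟪J sgn(B) h, h⟫ ≥ 0` on the vectors `h = |B|^(1/2) e^(-|B|) k`, which are dense.
-/

open Filter Topology Set
open scoped NNReal ZeroAtInfty

section Equation

variable {E : Type*} [NormedAddCommGroup E] [NormedSpace ℂ E]
  {G G' : Submodule ℂ (E × E)} {f f₁ f₂ u u₁ u₂ : ℝ → E} {s t : Set ℝ}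

/-- `u` is a `C¹` solution on `s` of `u' = -G u + f`, where the possibly unbounded operator `G` is
given by its graph. -/
def SolvesOn (G : Submodule ℂ (E × E)) (f u : ℝ → E) (s : Set ℝ) : Prop :=
  ∃ u' : ℝ → E, ContinuousOn u' s ∧ ∀ x ∈ s, HasDerivAt u (u' x) x ∧ (u x, f x - u' x) ∈ G

namespace SolvesOn

lemma mono (h : SolvesOn G f u s) (hts : t ⊆ s) : SolvesOn G f u t :=
  let ⟨u', hc, hu⟩ := h
  ⟨u', hc.mono hts, fun x hx => hu x (hts hx)⟩

lemma add (h₁ : SolvesOn G f₁ u₁ s) (h₂ : SolvesOn G f₂ u₂ s) :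
    SolvesOn G (fun x => f₁ x + f₂ x) (fun x => u₁ x + u₂ x) s := by
  obtain ⟨u₁', hc₁, h₁⟩ := h₁
  obtain ⟨u₂', hc₂, h₂⟩ := h₂
  refine ⟨fun x => u₁' x + u₂' x, hc₁.add hc₂, fun x hx => ⟨(h₁ x hx).1.add (h₂ x hx).1, ?_⟩⟩
  simpa only [Prod.mk_add_mk, add_sub_add_comm] using G.add_mem (h₁ x hx).2 (h₂ x hx).2

lemma sub (h₁ : SolvesOn G f₁ u₁ s) (h₂ : SolvesOn G f₂ u₂ s) :
    SolvesOn G (fun x => f₁ x - f₂ x) (fun x => u₁ x - u₂ x) s := by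
  obtain ⟨u₁', hc₁, h₁⟩ := h₁
  obtain ⟨u₂', hc₂, h₂⟩ := h₂
  refine ⟨fun x => u₁' x - u₂' x, hc₁.sub hc₂, fun x hx => ⟨(h₁ x hx).1.sub (h₂ x hx).1, ?_⟩⟩
  simpa only [Prod.mk_sub_mk, sub_sub_sub_comm] using G.sub_mem (h₁ x hx).2 (h₂ x hx).2

lemma map (h : SolvesOn G f u s) (T : E →L[ℂ] E) (hT : ∀ p ∈ G, (T p.1, T p.2) ∈ G') :
    SolvesOn G' (fun x => T (f x)) (fun x => T (u x)) s := by
  obtain ⟨u', hc, hu⟩ := h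
  refine ⟨fun x => T (u' x), T.continuous.comp_continuousOn hc, fun x hx =>
    ⟨(T.restrictScalars ℝ).hasFDerivAt.comp_hasDerivAt x (hu x hx).1, ?_⟩⟩
  simpa only [map_sub] using hT _ (hu x hx).2

lemma comp_const_sub (h : SolvesOn G f u s) (T : E →L[ℂ] E)
    (hT : ∀ p ∈ G, (T p.1, -T p.2) ∈ G') (X : ℝ) :
    SolvesOn G' (fun x => -T (f (X - x))) (fun x => T (u (X - x))) ((X - ·) ⁻¹' s) := by
  obtain ⟨u', hc, hu⟩ := h
  have hcont : ContinuousOn (fun x => u' (X - x)) ((X - ·) ⁻¹' s) :=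
    hc.comp (by fun_prop) (mapsTo_preimage _ _)
  refine ⟨fun x => -T (u' (X - x)), (T.continuous.comp_continuousOn hcont).neg,
    fun x hx => ⟨?_, ?_⟩⟩
  · simpa [Function.comp_def] using (T.restrictScalars ℝ).hasFDerivAt.comp_hasDerivAt x
      ((hu _ hx).1.comp_const_sub X x)
  · simpa [neg_add_eq_sub] using hT _ (hu _ hx).2

lemma congr (h : SolvesOn G f₁ u₁ s) (hs : IsOpen s) (hf : EqOn f₂ f₁ s) (hu : EqOn u₂ u₁ s) :
    SolvesOn G f₂ u₂ s := by
  obtain ⟨u', hc, h⟩ := h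
  refine ⟨u', hc, fun x hx =>
    ⟨(h x hx).1.congr_of_eventuallyEq (hu.eventuallyEq_of_mem (hs.mem_nhds hx)), ?_⟩⟩
  rw [hu hx, hf hx]
  exact (h x hx).2

lemma Ioi_of_forall_Ioo (h : ∀ X > 0, SolvesOn G f u (Ioo 0 X)) : SolvesOn G f u (Ioi 0) := by
  have key : ∀ x ∈ Ioi (0 : ℝ), ContinuousAt (deriv u) x ∧
      HasDerivAt u (deriv u x) x ∧ (u x, f x - deriv u x) ∈ G := fun x hx => by
    obtain ⟨u', hc, hu⟩ := h (x + 1) (by linarith [mem_Ioi.mp hx])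
    have hmem : Ioo 0 (x + 1) ∈ 𝓝 x := Ioo_mem_nhds hx (lt_add_one x)
    have heq : EqOn (deriv u) u' (Ioo 0 (x + 1)) := fun y hy => (hu y hy).1.deriv
    have hx' := hu x (mem_of_mem_nhds hmem)
    rw [← heq (mem_of_mem_nhds hmem)] at hx'
    exact ⟨(hc.continuousAt hmem).congr (heq.eventuallyEq_of_mem hmem).symm, hx'⟩
  exact ⟨deriv u, fun x hx => (key x hx).1.continuousWithinAt, fun x hx => (key x hx).2⟩

end SolvesOn

end Equation

section Holder

variable {E : Type*} [NormedAddCommGroup E] {g g' : ℝ → E}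

/-- Hölder continuity on every interval `[0, X]`, with constant and exponent depending on `X`. -/
def IsLocallyHolder (g : ℝ → E) : Prop :=
  ∀ X, ∃ C r : ℝ≥0, 0 < r ∧ HolderOnWith C r g (Icc 0 X)

lemma IsLocallyHolder.neg (hg : IsLocallyHolder g) : IsLocallyHolder (-g) := fun X => by
  obtain ⟨C, r, hr, h⟩ := hg X
  exact ⟨C, r, hr, by simpa [HolderOnWith] using h⟩

lemma IsLocallyHolder.congr (hg : IsLocallyHolder g) (h : EqOn g' g (Ici 0)) :
    IsLocallyHolder g' := fun X => by
  obtain ⟨C, r, hr, hX⟩ := hg X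
  refine ⟨C, r, hr, fun x hx y hy => ?_⟩
  rw [h hx.1, h hy.1]
  exact hX x hx y hy

lemma IsLocallyHolder.continuousOn (hg : IsLocallyHolder g) : ContinuousOn g (Ici 0) :=
  fun x hx => by
    obtain ⟨C, r, hr, h⟩ := hg (x + 1)
    have hmem : Icc 0 (x + 1) ∈ 𝓝[Ici 0] x :=
      inter_mem self_mem_nhdsWithin (mem_nhdsWithin_of_mem_nhds (Iic_mem_nhds (lt_add_one x)))
    exact (h.continuousOn hr x (mem_of_mem_nhdsWithin hx hmem)).mono_of_mem_nhdsWithin hmem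

lemma isLocallyHolder_of_norm_sub_le
    (h : ∀ X > (0 : ℝ), ∃ K : ℝ, ∃ k > (0 : ℝ), ∀ x ∈ Icc 0 X,
      ∀ y ∈ Icc 0 X, ‖g x - g y‖ ≤ K * |x - y| ^ k) :
    IsLocallyHolder g := fun X => by
  obtain ⟨K, k, hk, hX⟩ := h (max X 1) (by positivity)
  refine ⟨K.toNNReal, k.toNNReal, Real.toNNReal_pos.mpr hk, fun x hx y hy => ?_⟩
  have hle := hX x ⟨hx.1, hx.2.trans (le_max_left _ _)⟩ y ⟨hy.1, hy.2.trans (le_max_left _ _)⟩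
  rw [edist_dist, edist_dist, dist_eq_norm, Real.dist_eq, Real.coe_toNNReal _ hk.le,
    ENNReal.ofReal_rpow_of_nonneg (abs_nonneg _) hk.le]
  exact (ENNReal.ofReal_le_ofReal hle).trans_eq (ENNReal.ofReal_mul' (by positivity))

end Holder

section Semigroup

variable {E : Type*} [NormedAddCommGroup E] [NormedSpace ℂ E]

/-- `U` is a strongly continuous semigroup on `[0, ∞)` which is bounded by `M`, norm differentiable
on `(0, ∞)` and satisfies `‖U' t‖ ≤ M / t` there, as bounded analytic semigroups do. It is extended
to negative times by `1`, which makes `t ↦ U t h` continuous on all of `ℝ`. -/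
structure IsBoundedAnalyticSemigroup (M : ℝ) (U : ℝ → E →L[ℂ] E) : Prop where
  eq_one_of_nonpos : ∀ t ≤ 0, U t = 1
  add : ∀ s t, 0 < s → 0 < t → U (s + t) = U s * U t
  tendsto_zero : ∀ h, Tendsto (fun t => U t h) (𝓝[>] 0) (𝓝 h)
  differentiableAt : ∀ t, 0 < t → DifferentiableAt ℝ U t
  norm_le : ∀ t, ‖U t‖ ≤ M
  norm_deriv_le : ∀ t, 0 < t → ‖deriv U t‖ ≤ M / t

/-- The graph of the operator `G` with `U t = exp (-t G)`. Membership is tested after applying the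
regularising operators `U t`, `t > 0`, where `G U t = -U' t` is bounded. -/
def negGenerator (U : ℝ → E →L[ℂ] E) : Submodule ℂ (E × E) where
  carrier := {p | ∀ t, 0 < t → deriv U t p.1 = -U t p.2}
  zero_mem' := by simp
  add_mem' hp hq t ht := by simp [hp t ht, hq t ht, add_comm]
  smul_mem' c p hp t ht := by simp [hp t ht]

/-- The convolution of a semigroup with an inhomogeneity. -/
def duhamel (U : ℝ → E →L[ℂ] E) (g : ℝ → E) (t : ℝ) : E := ∫ s in (0 : ℝ)..t, U (t - s) (g s)

/-- The derivative of `duhamel U g` for Hölder continuous `g`: the singular integral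
`∫ U' (t - s) (g s)` is made convergent by subtracting `g t` from `g s`. -/
def duhamelDeriv (U : ℝ → E →L[ℂ] E) (g : ℝ → E) (t : ℝ) : E :=
  U t (g t) + ∫ s in (0 : ℝ)..t, deriv U s (g (t - s) - g t)

/-- The mild solution of `u' = -G u + g`, `u 0 = k`, where `U t = exp (-t G)`. -/
def mild (U : ℝ → E →L[ℂ] E) (g : ℝ → E) (k : E) (t : ℝ) : E := U t k + duhamel U g t

/-- The solution of `b' = G b - g` that stays bounded at infinity, where `U t = exp (-t G)`. -/
def backward (U : ℝ → E →L[ℂ] E) (g : ℝ → E) (x : ℝ) : E := ∫ y in Ioi x, U (y - x) (g y)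

namespace IsBoundedAnalyticSemigroup

variable {U : ℝ → E →L[ℂ] E} {M : ℝ} {g : ℝ → E}

lemma add_of_nonneg (hU : IsBoundedAnalyticSemigroup M U) {s t : ℝ} (hs : 0 ≤ s) (ht : 0 ≤ t) :
    U (s + t) = U s * U t := by
  rcases hs.eq_or_lt with rfl | hs
  · rw [hU.eq_one_of_nonpos 0 le_rfl, zero_add, one_mul]
  rcases ht.eq_or_lt with rfl | ht
  · rw [hU.eq_one_of_nonpos 0 le_rfl, add_zero, mul_one]
  exact hU.add s t hs ht

lemma commute (hU : IsBoundedAnalyticSemigroup M U) (s t : ℝ) : Commute (U s) (U t) := by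
  rcases le_or_gt s 0 with hs | hs
  · rw [hU.eq_one_of_nonpos s hs]; exact Commute.one_left _
  rcases le_or_gt t 0 with ht | ht
  · rw [hU.eq_one_of_nonpos t ht]; exact Commute.one_right _
  rw [Commute, SemiconjBy, ← hU.add s t hs ht, ← hU.add t s ht hs, add_comm]

lemma deriv_add (hU : IsBoundedAnalyticSemigroup M U) {s t : ℝ} (hs : 0 < s) (ht : 0 ≤ t) :
    deriv U (s + t) = deriv U s * U t := by
  have h : (fun r => U (r + t)) =ᶠ[𝓝 s] fun r => U r * U t := by
    filter_upwards [lt_mem_nhds hs] with r hr using hU.add_of_nonneg hr.le ht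
  rw [← deriv_comp_add_const, h.deriv_eq, deriv_mul_const (hU.differentiableAt s hs)]

lemma commute_deriv (hU : IsBoundedAnalyticSemigroup M U) {Q : E →L[ℂ] E}
    (hQ : ∀ t, Commute Q (U t)) {t : ℝ} (ht : 0 < t) : Commute Q (deriv U t) := by
  have h : (fun r => Q * U r) = fun r => U r * Q := funext fun r => (hQ r).eq
  rw [Commute, SemiconjBy, ← deriv_const_mul Q (hU.differentiableAt t ht), h,
    deriv_mul_const (hU.differentiableAt t ht)]

lemma continuous_apply_const (hU : IsBoundedAnalyticSemigroup M U) (h : E) :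
    Continuous fun t => U t h := by
  rw [continuous_iff_continuousAt]
  intro t
  rcases lt_trichotomy t 0 with ht | rfl | ht
  · refine continuousAt_const.congr (f := fun _ => h) ?_
    filter_upwards [gt_mem_nhds ht] with s hs
    rw [hU.eq_one_of_nonpos s hs.le, one_apply_eq_self]
  · have hU0 : U 0 h = h := by rw [hU.eq_one_of_nonpos 0 le_rfl, one_apply_eq_self]
    rw [← continuousWithinAt_univ, ← Iic_union_Ioi (a := (0 : ℝ)), continuousWithinAt_union]
    refine ⟨continuousWithinAt_const.congr (fun s hs => ?_) hU0, ?_⟩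
    · rw [hU.eq_one_of_nonpos s hs, one_apply_eq_self]
    · rw [ContinuousWithinAt, hU0]
      exact hU.tendsto_zero h
  · exact (hU.differentiableAt t ht).continuousAt.clm_apply continuousAt_const

lemma continuous_uncurry (hU : IsBoundedAnalyticSemigroup M U) :
    Continuous fun p : ℝ × E => U p.1 p.2 := by
  rw [continuous_iff_continuousAt]
  rintro ⟨t, h⟩
  have hfst : Tendsto (fun p : ℝ × E => U p.1 h) (𝓝 (t, h)) (𝓝 (U t h)) :=
    ((hU.continuous_apply_const h).comp continuous_fst).tendsto _
  have hsub : Tendsto (fun p : ℝ × E => U p.1 (p.2 - h)) (𝓝 (t, h)) (𝓝 0) := by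
    refine squeeze_zero_norm (fun p => (U p.1).le_of_opNorm_le (hU.norm_le p.1) _) ?_
    have : Continuous fun p : ℝ × E => M * ‖p.2 - h‖ := by fun_prop
    simpa using this.tendsto (t, h)
  simpa only [ContinuousAt, map_sub, add_sub_cancel, add_zero] using hfst.add hsub

lemma continuous_apply (hU : IsBoundedAnalyticSemigroup M U) {X : Type*} [TopologicalSpace X]
    {c : X → ℝ} {η : X → E} (hc : Continuous c) (hη : Continuous η) :
    Continuous fun x => U (c x) (η x) :=
  hU.continuous_uncurry.comp (hc.prodMk hη)

lemma norm_apply_le (hU : IsBoundedAnalyticSemigroup M U) (t : ℝ) (h : E) : ‖U t h‖ ≤ M * ‖h‖ :=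
  (U t).le_of_opNorm_le (hU.norm_le t) h

lemma nonneg (hU : IsBoundedAnalyticSemigroup M U) : 0 ≤ M :=
  (norm_nonneg _).trans (hU.norm_le 0)

lemma add_apply (hU : IsBoundedAnalyticSemigroup M U) {s t : ℝ} (hs : 0 ≤ s) (ht : 0 ≤ t) (h : E) :
    U (s + t) h = U s (U t h) := by
  rw [hU.add_of_nonneg hs ht, mul_apply_eq_comp]

lemma deriv_add_apply (hU : IsBoundedAnalyticSemigroup M U) {s t : ℝ} (hs : 0 < s) (ht : 0 ≤ t)
    (h : E) : deriv U (s + t) h = deriv U s (U t h) := by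
  rw [hU.deriv_add hs ht, mul_apply_eq_comp]

lemma deriv_add_apply' (hU : IsBoundedAnalyticSemigroup M U) {s t : ℝ} (hs : 0 < s) (ht : 0 ≤ t)
    (h : E) : deriv U (s + t) h = U t (deriv U s h) := by
  rw [hU.deriv_add hs ht, ← (hU.commute_deriv (hU.commute t) hs).eq, mul_apply_eq_comp]

lemma ext_apply (hU : IsBoundedAnalyticSemigroup M U) {v w : E}
    (h : ∀ ε, 0 < ε → U ε v = U ε w) : v = w := by
  refine tendsto_nhds_unique (hU.tendsto_zero v) ((hU.tendsto_zero w).congr' ?_)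
  filter_upwards [self_mem_nhdsWithin] with ε hε using (h ε hε).symm

lemma continuousAt_deriv_apply (hU : IsBoundedAnalyticSemigroup M U) {X : Type*}
    [TopologicalSpace X] {c : X → ℝ} {η : X → E} {x : X} (hc : ContinuousAt c x)
    (hη : ContinuousAt η x) (hpos : 0 < c x) : ContinuousAt (fun y => deriv U (c y) (η y)) x := by
  have hfactor : ContinuousAt (fun y => deriv U (c x / 2) (U (c y - c x / 2) (η y))) x :=
    (deriv U (c x / 2)).continuous.continuousAt.comp
      (hU.continuous_uncurry.continuousAt.comp ((hc.sub continuousAt_const).prodMk hη))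
  refine hfactor.congr ?_
  filter_upwards [hc.eventually (lt_mem_nhds (half_lt_self hpos))] with y hy
  rw [← hU.deriv_add_apply (half_pos hpos) (sub_nonneg.mpr hy.le), add_sub_cancel]

lemma hasDerivAt_apply (hU : IsBoundedAnalyticSemigroup M U) {c : ℝ → ℝ} {η : ℝ → E} {c' t : ℝ}
    {η' : E} (hc : HasDerivAt c c' t) (hpos : 0 < c t) (hη : HasDerivAt η η' t) :
    HasDerivAt (fun t => U (c t) (η t)) (c' • deriv U (c t) (η t) + U (c t) η') t := by
  have hUc : HasDerivAt (fun t => U (c t)) (c' • deriv U (c t)) t :=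
    (hU.differentiableAt _ hpos).hasDerivAt.scomp t hc
  exact ((ContinuousLinearMap.restrictScalarsL ℂ E E ℝ ℝ).hasFDerivAt.comp_hasDerivAt t
    hUc).clm_apply hη

lemma hasDerivAt_apply_const (hU : IsBoundedAnalyticSemigroup M U) {t : ℝ} (ht : 0 < t) (h : E) :
    HasDerivAt (fun t => U t h) (deriv U t h) t := by
  simpa using hU.hasDerivAt_apply (hasDerivAt_id t) ht (hasDerivAt_const t h)

lemma apply_mem_negGenerator (hU : IsBoundedAnalyticSemigroup M U) {t : ℝ} (ht : 0 < t) (h : E) :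
    (U t h, -deriv U t h) ∈ negGenerator U := fun s hs => by
  rw [map_neg, neg_neg, ← hU.deriv_add_apply hs ht.le, add_comm, hU.deriv_add_apply' ht hs.le]

lemma solvesOn_apply_const (hU : IsBoundedAnalyticSemigroup M U) (h : E) :
    SolvesOn (negGenerator U) (fun _ => 0) (fun t => U t h) (Ioi 0) :=
  ⟨fun t => deriv U t h, fun t ht =>
    (hU.continuousAt_deriv_apply (c := id) continuousAt_id continuousAt_const
      ht).continuousWithinAt,
    fun t ht => ⟨hU.hasDerivAt_apply_const ht h, by
      simpa using hU.apply_mem_negGenerator ht h⟩⟩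

lemma map_mem_negGenerator (hU : IsBoundedAnalyticSemigroup M U) {Q : E →L[ℂ] E}
    (hQ : ∀ t, Commute Q (U t)) {p : E × E} (hp : p ∈ negGenerator U) :
    (Q p.1, Q p.2) ∈ negGenerator U := fun t ht => by
  rw [← mul_apply_eq_comp, ← (hU.commute_deriv hQ ht).eq, mul_apply_eq_comp, hp t ht, map_neg,
    ← mul_apply_eq_comp, (hQ t).eq, mul_apply_eq_comp]

lemma mem_negGenerator_of_forall_exists (hU : IsBoundedAnalyticSemigroup M U) {v : E} {C : ℝ}
    (hv : ∀ X, 0 < X → ∃ w, ‖w‖ ≤ C ∧ U X w = v) : (v, 0) ∈ negGenerator U := fun δ hδ => by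
  have hbound : ∀ X > 0, ‖deriv U δ v‖ ≤ M * C * X⁻¹ := fun X hX => by
    obtain ⟨w, hw, rfl⟩ := hv X hX
    have := hU.nonneg
    have : 0 ≤ C := (norm_nonneg w).trans hw
    calc ‖deriv U δ (U X w)‖ = ‖deriv U (δ + X) w‖ := by rw [hU.deriv_add_apply hδ hX.le]
      _ ≤ M / (δ + X) * ‖w‖ :=
        (deriv U _).le_of_opNorm_le (hU.norm_deriv_le _ (add_pos hδ hX)) w
      _ ≤ M / X * C := by gcongr; linarith
      _ = M * C * X⁻¹ := by ring
  have hlim : Tendsto (fun X : ℝ => M * C * X⁻¹) atTop (𝓝 0) := by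
    simpa using tendsto_inv_atTop_zero.const_mul (M * C)
  rw [map_zero, neg_zero, ← norm_le_zero_iff]
  exact ge_of_tendsto hlim ((eventually_gt_atTop 0).mono hbound)

section Duhamel

variable {C r : ℝ≥0}

lemma continuous_duhamel (hU : IsBoundedAnalyticSemigroup M U) (hg : Continuous g) :
    Continuous (duhamel U g) :=
  intervalIntegral.continuous_parametric_intervalIntegral_of_continuous
    (f := fun t s => U (t - s) (g s)) (hU.continuous_apply (by fun_prop) (by fun_prop))
    continuous_id

lemma continuous_mild (hU : IsBoundedAnalyticSemigroup M U) (hg : Continuous g) (k : E) :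
    Continuous (mild U g k) :=
  (hU.continuous_apply_const k).add (hU.continuous_duhamel hg)

lemma norm_setIntegral_apply_le (hU : IsBoundedAnalyticSemigroup M U) (hi : IntegrableOn g (Ioi 0))
    {s : Set ℝ} (hs : s ⊆ Ioi 0) (c : ℝ → ℝ) :
    ‖∫ y in s, U (c y) (g y)‖ ≤ M * ∫ y in Ioi 0, ‖g y‖ :=
  calc ‖∫ y in s, U (c y) (g y)‖ ≤ ∫ y in s, M * ‖g y‖ :=
        norm_integral_le_of_norm_le ((hi.mono_set hs).norm.const_mul M)
          (Eventually.of_forall fun _ => hU.norm_apply_le _ _)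
    _ = M * ∫ y in s, ‖g y‖ := integral_const_mul _ _
    _ ≤ M * ∫ y in Ioi 0, ‖g y‖ := mul_le_mul_of_nonneg_left (setIntegral_mono_set hi.norm
        (Eventually.of_forall fun _ => norm_nonneg _) hs.eventuallyLE) hU.nonneg

lemma norm_backward_le (hU : IsBoundedAnalyticSemigroup M U) (hi : IntegrableOn g (Ioi 0)) {x : ℝ}
    (hx : 0 ≤ x) : ‖backward U g x‖ ≤ M * ∫ y in Ioi 0, ‖g y‖ :=
  hU.norm_setIntegral_apply_le hi (Ioi_subset_Ioi hx) _

lemma norm_mild_le (hU : IsBoundedAnalyticSemigroup M U) (hi : IntegrableOn g (Ioi 0)) (k : E)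
    {x : ℝ} (hx : 0 ≤ x) : ‖mild U g k x‖ ≤ M * ‖k‖ + M * ∫ y in Ioi 0, ‖g y‖ := by
  refine norm_add_le_of_le (hU.norm_apply_le x k) ?_
  rw [duhamel, intervalIntegral.integral_of_le hx]
  exact hU.norm_setIntegral_apply_le hi Ioc_subset_Ioi_self _

lemma mild_zero (hU : IsBoundedAnalyticSemigroup M U) (k : E) : mild U g k 0 = k := by
  simp [mild, duhamel, hU.eq_one_of_nonpos 0 le_rfl]

lemma integrableOn_apply_sub (hU : IsBoundedAnalyticSemigroup M U) (hg : Continuous g) {s : Set ℝ}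
    (hi : IntegrableOn g s) (x : ℝ) : IntegrableOn (fun y => U (y - x) (g y)) s :=
  (hi.norm.const_mul M).mono' (hU.continuous_apply (by fun_prop) hg).aestronglyMeasurable
    (Eventually.of_forall fun _ => hU.norm_apply_le _ _)

lemma norm_deriv_apply_sub_le (hU : IsBoundedAnalyticSemigroup M U) (hg : HolderWith C r g) {s : ℝ}
    (hs : 0 < s) (t : ℝ) : ‖deriv U s (g (t - s) - g t)‖ ≤ M * C * s ^ ((r : ℝ) - 1) := by
  have hgs : ‖g (t - s) - g t‖ ≤ C * s ^ (r : ℝ) := by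
    simpa [dist_eq_norm, abs_of_pos hs] using hg.dist_le (t - s) t
  calc ‖deriv U s (g (t - s) - g t)‖ ≤ M / s * ‖g (t - s) - g t‖ :=
        (deriv U s).le_of_opNorm_le (hU.norm_deriv_le s hs) _
    _ ≤ M / s * (C * s ^ (r : ℝ)) := by have := hU.nonneg; gcongr
    _ = M * C * s ^ ((r : ℝ) - 1) := by rw [Real.rpow_sub_one hs.ne']; ring

lemma continuousOn_deriv_apply_sub (hU : IsBoundedAnalyticSemigroup M U) (hg : Continuous g)
    (t : ℝ) : ContinuousOn (fun s => deriv U s (g (t - s) - g t)) (Ioi 0) := fun _ hs =>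
  (hU.continuousAt_deriv_apply (c := id) continuousAt_id (by fun_prop) hs).continuousWithinAt

lemma intervalIntegrable_deriv_apply_sub (hU : IsBoundedAnalyticSemigroup M U) (hr : 0 < r)
    (hg : HolderWith C r g) {t : ℝ} (ht : 0 ≤ t) :
    IntervalIntegrable (fun s => deriv U s (g (t - s) - g t)) volume 0 t := by
  have hbound : IntervalIntegrable (fun s : ℝ => M * C * s ^ ((r : ℝ) - 1)) volume 0 t :=
    (intervalIntegral.intervalIntegrable_rpow' (by simpa using hr)).const_mul _
  rw [intervalIntegrable_iff_integrableOn_Ioc_of_le ht] at hbound ⊢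
  refine hbound.mono' (((hU.continuousOn_deriv_apply_sub (hg.continuous hr) t).mono
    Ioc_subset_Ioi_self).aestronglyMeasurable measurableSet_Ioc) ?_
  filter_upwards [ae_restrict_mem measurableSet_Ioc] with s hs
  exact hU.norm_deriv_apply_sub_le hg hs.1 t

lemma continuousAt_duhamelDeriv (hU : IsBoundedAnalyticSemigroup M U) (hr : 0 < r)
    (hg : HolderWith C r g) {t : ℝ} (ht : 0 < t) : ContinuousAt (duhamelDeriv U g) t := by
  have hc := hg.continuous hr
  have hM := hU.nonneg
  refine (hU.continuous_apply continuous_id hc).continuousAt.add ?_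
  let F : ℝ → ℝ → E := fun t => (Ioi 0).indicator fun s => deriv U s (g (t - s) - g t)
  have hF : ContinuousAt (fun p : ℝ × ℝ => ∫ s in (0 : ℝ)..p.2, F p.1 s) (t, t) := by
    refine intervalIntegral.continuousAt_parametric_primitive_of_dominated
      (fun s => M * C * |s ^ ((r : ℝ) - 1)|) (-1) (t + 1) (fun x => ?_)
      (Eventually.of_forall fun x => Eventually.of_forall fun s => ?_)
      ((intervalIntegral.intervalIntegrable_rpow' (by simpa using hr)).norm.const_mul _)
      (Eventually.of_forall fun s => ?_) ⟨by norm_num, by linarith⟩ ⟨by linarith, by linarith⟩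
      (by simp)
    · refine AEStronglyMeasurable.mono_measure (μ := volume) ?_ Measure.restrict_le_self
      rw [aestronglyMeasurable_indicator_iff measurableSet_Ioi]
      exact (hU.continuousOn_deriv_apply_sub hc x).aestronglyMeasurable measurableSet_Ioi
    · rw [norm_indicator_eq_indicator_norm]
      exact indicator_apply_le' (fun hs => (hU.norm_deriv_apply_sub_le hg hs x).trans
        (by gcongr; exact le_abs_self _)) fun _ => by positivity
    · by_cases hs : s ∈ Ioi 0
      · simp only [F, indicator_of_mem hs]
        fun_prop
      · simp only [F, indicator_of_notMem hs]
        fun_prop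
  have hdiag : ContinuousAt (fun u => ∫ s in (0 : ℝ)..u, F u s) t :=
    hF.comp (f := fun u : ℝ => (u, u)) (by fun_prop)
  refine hdiag.congr ?_
  filter_upwards [lt_mem_nhds ht] with u hu
  refine intervalIntegral.integral_congr_ae (Eventually.of_forall fun s hs => ?_)
  rw [uIoc_of_le hu.le] at hs
  exact indicator_of_mem (mem_Ioi.mpr hs.1) _

variable [CompleteSpace E]

lemma apply_duhamel (hU : IsBoundedAnalyticSemigroup M U) (hg : Continuous g) {a t : ℝ}
    (ha : 0 ≤ a) (ht : 0 ≤ t) : U a (duhamel U g t) = ∫ s in (0 : ℝ)..t, U (a + (t - s)) (g s) := by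
  have hc : Continuous fun s => U (t - s) (g s) := hU.continuous_apply (by fun_prop) hg
  rw [duhamel, ← ContinuousLinearMap.intervalIntegral_comp_comm _ (hc.intervalIntegrable _ _)]
  refine intervalIntegral.integral_congr fun s hs => ?_
  rw [uIcc_of_le ht] at hs
  rw [hU.add_apply ha (sub_nonneg.mpr hs.2)]

lemma hasDerivAt_apply_duhamel (hU : IsBoundedAnalyticSemigroup M U) (hg : Continuous g) {ε t : ℝ}
    (hε : 0 < ε) (ht : 0 < t) :
    HasDerivAt (fun t => U ε (duhamel U g t)) (deriv U ε (duhamel U g t) + U ε (g t)) t := by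
  obtain ⟨δ, hδ, rfl⟩ : ∃ δ, 0 < δ ∧ ε = δ + δ := ⟨ε / 2, half_pos hε, (add_halves ε).symm⟩
  have hc : Continuous fun s => U (δ + (t - s)) (g s) := hU.continuous_apply (by fun_prop) hg
  have hprim : HasDerivAt (fun u => ∫ s in (0 : ℝ)..u, U (δ + (t - s)) (g s))
      (U (δ + (t - t)) (g t)) t :=
    intervalIntegral.integral_hasDerivAt_right (hc.intervalIntegrable _ _)
      (hc.stronglyMeasurableAtFilter _ _) hc.continuousAt
  have hshift : HasDerivAt (fun u : ℝ => δ + (u - t)) 1 t :=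
    ((hasDerivAt_id t).sub_const t).const_add δ
  have h := hU.hasDerivAt_apply hshift (by simpa using hδ) hprim
  simp only [sub_self, add_zero, one_smul] at h
  rw [← hU.apply_duhamel hg hδ.le ht.le, ← hU.deriv_add_apply hδ hδ.le,
    ← hU.add_apply hδ.le hδ.le] at h
  -- near `t` the factor `U (δ + (u - t))` can be pulled out of the integral
  refine h.congr_of_eventuallyEq ?_
  filter_upwards [lt_mem_nhds ht, lt_mem_nhds (sub_lt_self t hδ),
    gt_mem_nhds (lt_add_of_pos_right t hδ)] with u hu hlower hupper
  rw [hU.apply_duhamel hg (by positivity) hu.le,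
    ← ContinuousLinearMap.intervalIntegral_comp_comm _ (hc.intervalIntegrable _ _)]
  refine intervalIntegral.integral_congr fun s hs => ?_
  rw [uIcc_of_le hu.le] at hs
  rw [← hU.add_apply (by linarith) (by linarith [hs.2])]
  ring_nf

lemma integral_deriv_apply (hU : IsBoundedAnalyticSemigroup M U) {ε t : ℝ} (hε : 0 < ε)
    (ht : 0 ≤ t) (h : E) : ∫ s in (0 : ℝ)..t, deriv U ε (U s h) = U ε (U t h) - U ε h := by
  have hderiv : ∀ s ∈ uIcc 0 t, HasDerivAt (fun s => U (ε + s) h) (deriv U ε (U s h)) s := by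
    intro s hs
    rw [uIcc_of_le ht] at hs
    rw [← hU.deriv_add_apply hε hs.1]
    exact (hU.hasDerivAt_apply_const (by linarith [hs.1]) h).comp_const_add ε s
  have hc : Continuous fun s => deriv U ε (U s h) :=
    (deriv U ε).continuous.comp (hU.continuous_apply_const h)
  rw [intervalIntegral.integral_eq_sub_of_hasDerivAt hderiv (hc.intervalIntegrable _ _), add_zero,
    hU.add_apply hε.le ht]

lemma deriv_apply_duhamel (hU : IsBoundedAnalyticSemigroup M U) (hr : 0 < r)
    (hg : HolderWith C r g) {ε t : ℝ} (hε : 0 < ε) (ht : 0 ≤ t) :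
    deriv U ε (duhamel U g t) = U ε (duhamelDeriv U g t) - U ε (g t) := by
  have hc := hg.continuous hr
  have hconv : Continuous fun s => U s (g (t - s)) :=
    hU.continuous_apply continuous_id (by fun_prop)
  have hderivconv : Continuous fun s => deriv U ε (U s (g (t - s))) :=
    (deriv U ε).continuous.comp hconv
  have hderivconst : Continuous fun s => deriv U ε (U s (g t)) :=
    (deriv U ε).continuous.comp (hU.continuous_apply_const _)
  have hsubst : duhamel U g t = ∫ s in (0 : ℝ)..t, U s (g (t - s)) := by
    simpa [duhamel] using
      intervalIntegral.integral_comp_sub_left (fun s => U s (g (t - s))) t (a := 0) (b := t)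
  have hcomm : U ε (∫ s in (0 : ℝ)..t, deriv U s (g (t - s) - g t)) =
      ∫ s in (0 : ℝ)..t, (deriv U ε (U s (g (t - s))) - deriv U ε (U s (g t))) := by
    rw [← ContinuousLinearMap.intervalIntegral_comp_comm _
      (hU.intervalIntegrable_deriv_apply_sub hr hg ht)]
    refine intervalIntegral.integral_congr_ae (Eventually.of_forall fun s hs => ?_)
    rw [uIoc_of_le ht] at hs
    rw [← map_sub, ← map_sub, ← hU.deriv_add_apply hε hs.1.le, add_comm,
      hU.deriv_add_apply' hs.1 hε.le]
  rw [duhamelDeriv, map_add, hcomm,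
    intervalIntegral.integral_sub (hderivconv.intervalIntegrable _ _)
      (hderivconst.intervalIntegrable _ _), hU.integral_deriv_apply hε ht,
    ContinuousLinearMap.intervalIntegral_comp_comm _ (hconv.intervalIntegrable _ _), ← hsubst]
  abel

lemma hasDerivAt_duhamel (hU : IsBoundedAnalyticSemigroup M U) (hr : 0 < r)
    (hg : HolderWith C r g) {t : ℝ} (ht : 0 < t) :
    HasDerivAt (duhamel U g) (duhamelDeriv U g t) t := by
  have hcont : ContinuousOn (duhamelDeriv U g) (Ioi 0) := fun s hs =>
    (hU.continuousAt_duhamelDeriv hr hg hs).continuousWithinAt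
  have hsub : ∀ u, 0 < u → uIcc t u ⊆ Ioi 0 := fun u hu s hs =>
    (lt_min ht hu).trans_le hs.1
  have hint : ∀ u, 0 < u → IntervalIntegrable (duhamelDeriv U g) volume t u := fun u hu =>
    (hcont.mono (hsub u hu)).intervalIntegrable
  have hftc : ∀ u, 0 < u →
      duhamel U g u = duhamel U g t + ∫ s in t..u, duhamelDeriv U g s := fun u hu => by
    refine hU.ext_apply fun ε hε => ?_
    have hderiv : ∀ s ∈ uIcc t u,
        HasDerivAt (fun s => U ε (duhamel U g s)) (U ε (duhamelDeriv U g s)) s := fun s hs => by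
      have hs0 : 0 < s := hsub u hu hs
      simpa only [hU.deriv_apply_duhamel hr hg hε hs0.le, sub_add_cancel] using
        hU.hasDerivAt_apply_duhamel (hg.continuous hr) hε hs0
    rw [map_add, ← ContinuousLinearMap.intervalIntegral_comp_comm _ (hint u hu),
      intervalIntegral.integral_eq_sub_of_hasDerivAt hderiv
        ((U ε).continuous.comp_continuousOn (hcont.mono (hsub u hu))).intervalIntegrable,
      add_sub_cancel]
  have h := (intervalIntegral.integral_hasDerivAt_right (hint t ht)
    (hcont.stronglyMeasurableAtFilter isOpen_Ioi t ht)
    (hcont.continuousAt (Ioi_mem_nhds ht))).const_add (duhamel U g t)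
  refine h.congr_of_eventuallyEq ?_
  filter_upwards [lt_mem_nhds ht] with u hu using hftc u hu

lemma solvesOn_duhamel (hU : IsBoundedAnalyticSemigroup M U) (hr : 0 < r)
    (hg : HolderWith C r g) : SolvesOn (negGenerator U) g (duhamel U g) (Ioi 0) :=
  ⟨duhamelDeriv U g, fun _ ht => (hU.continuousAt_duhamelDeriv hr hg ht).continuousWithinAt,
    fun _ ht => ⟨hU.hasDerivAt_duhamel hr hg ht, fun ε hε => by
      rw [hU.deriv_apply_duhamel hr hg hε (mem_Ioi.mp ht).le, map_sub, neg_sub]⟩⟩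

lemma solvesOn_mild (hU : IsBoundedAnalyticSemigroup M U) (hr : 0 < r) {T : ℝ}
    (hg : HolderOnWith C r g (Icc 0 T)) (k : E) :
    SolvesOn (negGenerator U) g (mild U g k) (Ioo 0 T) := by
  rcases le_or_gt T 0 with hT | hT
  · exact ⟨0, continuousOn_const, fun x hx => absurd (hx.1.trans hx.2) hT.not_gt⟩
  let p : ℝ → ℝ := fun s => projIcc 0 T hT.le s
  have hp : ∀ s ∈ Icc 0 T, p s = s := fun s hs => by simp [p, projIcc_of_mem hT.le hs]
  have hproj : HolderWith C r (g ∘ p) := by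
    have hp1 : HolderWith 1 1 p := holderWith_one.mpr
      ((LipschitzWith.subtype_val _).comp (LipschitzWith.projIcc hT.le) |>.weaken (by simp))
    simpa using hg.comp_holderWith hp1 fun s => (projIcc 0 T hT.le s).2
  have hduhamel : SolvesOn (negGenerator U) g (duhamel U g) (Ioo 0 T) := by
    refine ((hU.solvesOn_duhamel hr hproj).mono Ioo_subset_Ioi_self).congr isOpen_Ioo
      (fun s hs => by simp [hp s (Ioo_subset_Icc_self hs)])
      fun t ht => intervalIntegral.integral_congr fun s hs => ?_
    rw [uIcc_of_le ht.1.le] at hs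
    simp [hp s ⟨hs.1, hs.2.trans ht.2.le⟩]
  exact (((hU.solvesOn_apply_const k).mono Ioo_subset_Ioi_self).add hduhamel).congr isOpen_Ioo
    (fun _ _ => (zero_add _).symm) fun _ _ => rfl

lemma eq_apply_of_solvesOn (hU : IsBoundedAnalyticSemigroup M U) {u : ℝ → E} {a b : ℝ}
    (hab : a ≤ b) (hc : ContinuousOn u (Icc a b))
    (hu : SolvesOn (negGenerator U) (fun _ => 0) u (Ioo a b)) : u b = U (b - a) (u a) := by
  obtain ⟨u', -, hu⟩ := hu
  have hcont : ContinuousOn (fun x => U (b - x) (u x)) (Icc a b) :=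
    hU.continuous_uncurry.comp_continuousOn ((by fun_prop : ContinuousOn (b - ·) _).prodMk hc)
  have hderiv : ∀ x ∈ Ioo a b, HasDerivAt (fun x => U (b - x) (u x)) 0 x := fun x hx => by
    have hx' : 0 < b - x := sub_pos.mpr hx.2
    have hgraph := (hu x hx).2 _ hx'
    rw [zero_sub, map_neg, neg_neg] at hgraph
    simpa [hgraph] using
      hU.hasDerivAt_apply ((hasDerivAt_id x).const_sub b) hx' (hu x hx).1
  have hconst := intervalIntegral.integral_eq_sub_of_hasDerivAt_of_le hab hcont hderiv
    intervalIntegrable_const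
  rw [intervalIntegral.integral_zero, sub_self, hU.eq_one_of_nonpos 0 le_rfl] at hconst
  exact sub_eq_zero.mp hconst.symm

lemma backward_eq_mild (hU : IsBoundedAnalyticSemigroup M U) (hg : Continuous g) {x X : ℝ}
    (hx : x ≤ X) (hi : IntegrableOn g (Ioi X)) :
    backward U g x = mild U (fun s => g (X - s)) (backward U g X) (X - x) := by
  have hc : Continuous fun y => U (y - x) (g y) := hU.continuous_apply (by fun_prop) hg
  have hsplit : backward U g x =
      (∫ y in Ioi X, U (y - x) (g y)) + ∫ y in x..X, U (y - x) (g y) := by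
    rw [backward, ← Ioc_union_Ioi_eq_Ioi hx, setIntegral_union (Ioc_disjoint_Ioi le_rfl)
      measurableSet_Ioi (hc.intervalIntegrable x X).1 (hU.integrableOn_apply_sub hg hi x),
      intervalIntegral.integral_of_le hx, add_comm]
  have hfar : ∫ y in Ioi X, U (y - x) (g y) = U (X - x) (backward U g X) := by
    rw [backward, ← ContinuousLinearMap.integral_comp_comm _ (hU.integrableOn_apply_sub hg hi X)]
    refine setIntegral_congr_fun measurableSet_Ioi fun y (hy : X < y) => ?_
    rw [← hU.add_apply (sub_nonneg.mpr hx) (sub_nonneg.mpr hy.le), add_comm,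
      sub_add_sub_cancel]
  have hnear : ∫ y in x..X, U (y - x) (g y) = duhamel U (fun s => g (X - s)) (X - x) := by
    simpa [duhamel, sub_right_comm] using (intervalIntegral.integral_comp_sub_left
      (fun y => U (y - x) (g y)) X (a := 0) (b := X - x)).symm
  rw [hsplit, hfar, hnear, mild]

lemma continuousAt_backward (hU : IsBoundedAnalyticSemigroup M U) (hg : Continuous g)
    (hi : IntegrableOn g (Ioi 0)) {x : ℝ} (hx : 0 ≤ x) : ContinuousAt (backward U g) x := by
  have hmild : Continuous fun y =>
      mild U (fun s => g (x + 1 - s)) (backward U g (x + 1)) (x + 1 - y) :=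
    (hU.continuous_mild (by fun_prop) _).comp (by fun_prop)
  refine hmild.continuousAt.congr ?_
  filter_upwards [gt_mem_nhds (lt_add_one x)] with y hy
  exact (hU.backward_eq_mild hg hy.le (hi.mono_set (Ioi_subset_Ioi (by positivity)))).symm

end Duhamel

end IsBoundedAnalyticSemigroup

/-- `ψ` is a bounded solution of the half-space problem `ψ' = -G ψ + f` on `(0, ∞)`,
`P (ψ 0) = φ`, where the operator `G` is given by its graph. -/
def IsBoundedSolution (G : Submodule ℂ (E × E)) (P : E →L[ℂ] E) (φ : E) (f ψ : ℝ → E) : Prop :=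
  ContinuousOn ψ (Ici 0) ∧ SolvesOn G f ψ (Ioi 0) ∧ P (ψ 0) = φ ∧ ∃ C, ∀ x ∈ Ici 0, ‖ψ x‖ ≤ C

/-- The projection `Q` reduces the operator `G` to a positive part on `ran Q` and a negative part on
`ker Q`, and `U t = exp (-t |G|)`: the negative of the generator of `U` is `G` on `ran Q` and `-G`
on `ker Q`. -/
structure IsSpectralSplitting (G : Submodule ℂ (E × E)) (U : ℝ → E →L[ℂ] E) (Q : E →L[ℂ] E) :
    Prop where
  isIdempotentElem : IsIdempotentElem Q
  commute : ∀ t, Commute Q (U t)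
  mem_iff : ∀ v w, (v, w) ∈ G ↔
    (Q v, Q w) ∈ negGenerator U ∧ ((1 - Q) v, -(1 - Q) w) ∈ negGenerator U

/-- The operator `P Q + (1 - P) (1 - Q)` comparing the projection `P` occurring in the boundary
condition with the spectral projection `Q`. The half-space problem is well posed when it is
invertible. -/
def halfRangeOperator (P Q : E →L[ℂ] E) : E →L[ℂ] E := P * Q + (1 - P) * (1 - Q)

/-- The bounded solution of `ψ' = -G ψ + g` with `Q (ψ 0) = Q k`: the component in `ran Q` is
propagated from `0` and the component in `ker Q` from infinity. -/
def boundedSolution (U : ℝ → E →L[ℂ] E) (Q : E →L[ℂ] E) (g : ℝ → E) (k : E) (x : ℝ) : E :=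
  Q (mild U g k x) + (1 - Q) (backward U (-g) x)

section HalfSpace

variable {G : Submodule ℂ (E × E)} {U : ℝ → E →L[ℂ] E} {P Q : E →L[ℂ] E} {M : ℝ}
  {g ψ ψ₁ ψ₂ : ℝ → E} {φ : E}

lemma IsBoundedSolution.sub (h₁ : IsBoundedSolution G P φ g ψ₁)
    (h₂ : IsBoundedSolution G P φ g ψ₂) :
    IsBoundedSolution G P 0 (fun _ => 0) (fun x => ψ₁ x - ψ₂ x) := by
  obtain ⟨hc₁, hs₁, hP₁, C₁, hC₁⟩ := h₁
  obtain ⟨hc₂, hs₂, hP₂, C₂, hC₂⟩ := h₂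
  exact ⟨hc₁.sub hc₂, by simpa using hs₁.sub hs₂, by rw [map_sub, hP₁, hP₂, sub_self],
    C₁ + C₂, fun x hx => norm_sub_le_of_le (hC₁ x hx) (hC₂ x hx)⟩

namespace IsSpectralSplitting

lemma map_mem (hQ : IsSpectralSplitting G U Q) (hU : IsBoundedAnalyticSemigroup M U) {p : E × E}
    (hp : p ∈ negGenerator U) : (Q p.1, Q p.2) ∈ G := by
  have hQQ := hQ.isIdempotentElem
  have hQ' := hU.map_mem_negGenerator hQ.commute hp
  rw [hQ.mem_iff]
  simp only [← mul_apply_eq_comp, hQQ.eq, hQQ.one_sub_mul_self, zero_apply, neg_zero]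
  exact ⟨hQ', (negGenerator U).zero_mem⟩

lemma map_one_sub_mem (hQ : IsSpectralSplitting G U Q) (hU : IsBoundedAnalyticSemigroup M U)
    {p : E × E} (hp : p ∈ negGenerator U) : ((1 - Q) p.1, -(1 - Q) p.2) ∈ G := by
  have hQQ := hQ.isIdempotentElem
  have hQ' := hU.map_mem_negGenerator (fun t => (Commute.one_left _).sub_left (hQ.commute t)) hp
  rw [hQ.mem_iff]
  simp only [map_neg, neg_neg, ← mul_apply_eq_comp, hQQ.mul_one_sub_self, hQQ.one_sub.eq,
    zero_apply, neg_zero]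
  exact ⟨(negGenerator U).zero_mem, hQ'⟩

variable [CompleteSpace E]

lemma solvesOn_mild (hQ : IsSpectralSplitting G U Q) (hU : IsBoundedAnalyticSemigroup M U)
    (hg : IsLocallyHolder g) (k : E) :
    SolvesOn G (fun x => Q (g x)) (fun x => Q (mild U g k x)) (Ioi 0) :=
  SolvesOn.Ioi_of_forall_Ioo fun X _ =>
    let ⟨_, _, hr, h⟩ := hg X
    (hU.solvesOn_mild hr h k).map Q fun _ => hQ.map_mem hU

lemma solvesOn_backward (hQ : IsSpectralSplitting G U Q) (hU : IsBoundedAnalyticSemigroup M U)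
    (hc : Continuous g) (hi : IntegrableOn g (Ioi 0)) (hg : IsLocallyHolder g) :
    SolvesOn G (fun x => -(1 - Q) (g x)) (fun x => (1 - Q) (backward U g x)) (Ioi 0) := by
  refine SolvesOn.Ioi_of_forall_Ioo fun X hX => ?_
  obtain ⟨C, r, hr, h⟩ := hg X
  have hreflect : HolderOnWith C r (fun s => g (X - s)) (Icc 0 X) := fun x hx y hy => by
    simpa [edist_sub_left] using h (X - x) ⟨sub_nonneg.mpr hx.2, sub_le_self _ hx.1⟩
      (X - y) ⟨sub_nonneg.mpr hy.2, sub_le_self _ hy.1⟩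
  have hsol := (hU.solvesOn_mild hr hreflect (backward U g X)).comp_const_sub (1 - Q)
    (fun _ => hQ.map_one_sub_mem hU) X
  rw [preimage_const_sub_Ioo, sub_zero, sub_self] at hsol
  refine hsol.congr isOpen_Ioo (fun x _ => by simp) fun x hx => ?_
  simp only [hU.backward_eq_mild hc hx.2.le (hi.mono_set (Ioi_subset_Ioi hX.le))]

lemma isBoundedSolution (hQ : IsSpectralSplitting G U Q) (hU : IsBoundedAnalyticSemigroup M U)
    (hc : Continuous g) (hi : IntegrableOn g (Ioi 0)) (hg : IsLocallyHolder g) (P : E →L[ℂ] E)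
    (k : E) : IsBoundedSolution G P (P (Q k + (1 - Q) (backward U (-g) 0))) g
      (boundedSolution U Q g k) := by
  have hi' : IntegrableOn (-g) (Ioi 0) := hi.neg
  refine ⟨?_, ?_, by rw [boundedSolution, hU.mild_zero], ?_⟩
  · exact (Q.continuous.comp (hU.continuous_mild hc k)).continuousOn.add fun x hx =>
      ((1 - Q).continuous.continuousAt.comp
        (hU.continuousAt_backward hc.neg hi' hx)).continuousWithinAt
  · exact ((hQ.solvesOn_mild hU hg k).add (hQ.solvesOn_backward hU hc.neg hi' hg.neg)).congr
      isOpen_Ioi (fun x _ => by simp) fun _ _ => rfl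
  · exact ⟨_, fun x hx => norm_add_le_of_le (Q.le_opNorm_of_le (hU.norm_mild_le hi k hx))
      ((1 - Q).le_opNorm_of_le (hU.norm_backward_le hi' hx))⟩

lemma exists_isBoundedSolution_of_continuous (hQ : IsSpectralSplitting G U Q)
    (hU : IsBoundedAnalyticSemigroup M U) (hP : IsIdempotentElem P)
    (hV : Function.Surjective (halfRangeOperator P Q)) (hc : Continuous g)
    (hi : IntegrableOn g (Ioi 0)) (hg : IsLocallyHolder g) (hφ : P φ = φ) :
    ∃ ψ, IsBoundedSolution G P φ g ψ := by
  obtain ⟨k, hk⟩ := hV (φ - P ((1 - Q) (backward U (-g) 0)))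
  have hPk : P (Q k) = φ - P ((1 - Q) (backward U (-g) 0)) := by
    have hPV : P * halfRangeOperator P Q = P * Q := by
      rw [halfRangeOperator, mul_add, ← mul_assoc, ← mul_assoc, hP.mul_one_sub_self, hP.eq,
        zero_mul, add_zero]
    rw [← mul_apply_eq_comp, ← hPV, mul_apply_eq_comp, hk, map_sub, hφ, ← mul_apply_eq_comp P P,
      hP.eq]
  have h := hQ.isBoundedSolution hU hc hi hg P k
  rw [map_add, hPk, sub_add_cancel] at h
  exact ⟨_, h⟩

theorem exists_isBoundedSolution (hQ : IsSpectralSplitting G U Q)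
    (hU : IsBoundedAnalyticSemigroup M U) (hP : IsIdempotentElem P)
    (hV : Function.Surjective (halfRangeOperator P Q)) (hi : IntegrableOn g (Ioi 0))
    (hg : IsLocallyHolder g) (hφ : P φ = φ) : ∃ ψ, IsBoundedSolution G P φ g ψ := by
  have hc : Continuous fun x => g (max x 0) :=
    hg.continuousOn.comp_continuous (by fun_prop) fun x => le_max_right x 0
  have heq : EqOn (fun x => g (max x 0)) g (Ici 0) := fun x hx => congrArg g (max_eq_left hx)
  have heq' : EqOn g (fun x => g (max x 0)) (Ioi 0) := (heq.mono Ioi_subset_Ici_self).symm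
  obtain ⟨ψ, hψc, hψs, hψ⟩ := hQ.exists_isBoundedSolution_of_continuous hU hP hV hc
    (hi.congr_fun heq' measurableSet_Ioi) (hg.congr heq) hφ
  exact ⟨ψ, hψc, hψs.congr isOpen_Ioi heq' fun _ _ => rfl, hψ⟩

lemma one_sub_apply_eq_zero (hQ : IsSpectralSplitting G U Q) (hU : IsBoundedAnalyticSemigroup M U)
    (hker : ∀ v, (v, 0) ∈ G → v = 0) (hψ : IsBoundedSolution G P φ (fun _ => 0) ψ) {x : ℝ}
    (hx : 0 ≤ x) : (1 - Q) (ψ x) = 0 := by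
  obtain ⟨hc, hs, -, C, hC⟩ := hψ
  have hpropagate : ∀ X, 0 < X → U X ((1 - Q) (ψ (x + X))) = (1 - Q) (ψ x) := fun X hX => by
    have hsub : Ioo x (x + X) ⊆ Ioi 0 := fun y hy => hx.trans_lt hy.1
    have hrev : SolvesOn (negGenerator U) (fun _ => 0) (fun y => (1 - Q) (ψ (x + X - y)))
        (Ioo 0 X) := by
      simpa using (hs.mono hsub).comp_const_sub (1 - Q) (fun p hp => ((hQ.mem_iff _ _).mp hp).2)
        (x + X)
    have hcont : ContinuousOn (fun y => (1 - Q) (ψ (x + X - y))) (Icc 0 X) :=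
      (1 - Q).continuous.comp_continuousOn
        (hc.comp (by fun_prop) fun y hy => by simp; linarith [hy.2])
    simpa using (hU.eq_apply_of_solvesOn hX.le hcont hrev).symm
  have hgen : ((1 - Q) (ψ x), 0) ∈ negGenerator U :=
    hU.mem_negGenerator_of_forall_exists (C := ‖1 - Q‖ * C) fun X hX =>
      ⟨_, (1 - Q).le_opNorm_of_le (hC _ (add_nonneg hx hX.le)), hpropagate X hX⟩
  have hG := hQ.map_one_sub_mem hU hgen
  rw [← mul_apply_eq_comp, hQ.isIdempotentElem.one_sub.eq, map_zero, neg_zero] at hG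
  exact hker _ hG

theorem eqOn_zero (hQ : IsSpectralSplitting G U Q) (hU : IsBoundedAnalyticSemigroup M U)
    (hV : Function.Injective (halfRangeOperator P Q)) (hker : ∀ v, (v, 0) ∈ G → v = 0)
    (hψ : IsBoundedSolution G P 0 (fun _ => 0) ψ) : EqOn ψ 0 (Ici 0) := by
  have hQψ : ∀ x, 0 ≤ x → Q (ψ x) = ψ x := fun x hx => by
    have h := hQ.one_sub_apply_eq_zero hU hker hψ hx
    rw [sub_apply, one_apply_eq_self, sub_eq_zero] at h
    exact h.symm
  obtain ⟨hc, hs, hP, -⟩ := hψ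
  have hψ0 : ψ 0 = 0 := hV <| by
    simp [halfRangeOperator, hQψ 0 le_rfl, hP]
  intro x hx
  have hQs : SolvesOn (negGenerator U) (fun _ => 0) (fun y => Q (ψ y)) (Ioo 0 x) := by
    simpa using (hs.mono Ioo_subset_Ioi_self).map Q fun p hp => ((hQ.mem_iff _ _).mp hp).1
  have hQc : ContinuousOn (fun y => Q (ψ y)) (Icc 0 x) :=
    Q.continuous.comp_continuousOn (hc.mono Icc_subset_Ici_self)
  simpa [hQψ x hx, hψ0] using hU.eq_apply_of_solvesOn hx hQc hQs

end IsSpectralSplitting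

end HalfSpace

end Semigroup

section Resolvent

variable {A : H →ₗ.[ℂ] H} {R R' : H →L[ℂ] H} {c c' : ℂ}

lemma mem_graph_iff_forall_inner_eq (hA : IsSelfAdjoint A) {x y : H} :
    (x, y) ∈ A.graph ↔ ∀ x' y', (x', y') ∈ A.graph → ⟪y, x'⟫_ℂ = ⟪x, y'⟫_ℂ := by
  have hadj := LinearPMap.isSelfAdjoint_def.mp hA
  have hdense := hA.dense_domain
  constructor
  · intro hxy x' y' hxy'
    obtain ⟨u, rfl, rfl⟩ := (LinearPMap.mem_graph_iff A).mp hxy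
    obtain ⟨v, rfl, rfl⟩ := (LinearPMap.mem_graph_iff A).mp hxy'
    have h := LinearPMap.adjoint_isFormalAdjoint hdense
    rw [hadj] at h
    exact h u v
  · intro h
    have hx : ∃ w, ∀ u : A.domain, ⟪w, (u : H)⟫_ℂ = ⟪x, A u⟫_ℂ :=
      ⟨y, fun u => h _ _ (A.mem_graph u)⟩
    have hmem := LinearPMap.mem_adjoint_domain_of_exists x hx
    have hval := LinearPMap.adjoint_apply_eq hdense ⟨x, hmem⟩ fun u => h _ _ (A.mem_graph u)
    rw [← hadj, ← hval]
    exact A.adjoint.mem_graph ⟨x, hmem⟩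

lemma norm_le_of_mem_graph (hA : IsSelfAdjoint A) {x y : H} (h : (x, y) ∈ A.graph) (c : ℂ) :
    |c.im| * ‖x‖ ≤ ‖y + c • x‖ := by
  have hreal : (⟪x, y⟫_ℂ).im = 0 := by
    rw [← Complex.conj_eq_iff_im, inner_conj_symm]
    exact (mem_graph_iff_forall_inner_eq hA).mp h x y h
  have him : (⟪x, y + c • x⟫_ℂ).im = c.im * ‖x‖ ^ 2 := by
    have hself : ⟪x, x⟫_ℂ = (‖x‖ ^ 2 : ℝ) := by simp [inner_self_eq_norm_sq_to_K]
    rw [inner_add_right, inner_smul_right, hself, Complex.add_im, hreal, zero_add,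
      Complex.im_mul_ofReal]
  have hle : |c.im| * ‖x‖ * ‖x‖ ≤ ‖y + c • x‖ * ‖x‖ := calc
    |c.im| * ‖x‖ * ‖x‖ = |(⟪x, y + c • x⟫_ℂ).im| := by
      rw [him, abs_mul, abs_of_nonneg (sq_nonneg ‖x‖)]; ring
    _ ≤ ‖x‖ * ‖y + c • x‖ := (Complex.abs_im_le_norm _).trans (norm_inner_le_norm _ _)
    _ = ‖y + c • x‖ * ‖x‖ := mul_comm _ _
  rcases (norm_nonneg x).eq_or_lt with hx | hx
  · simp [← hx]
  · exact le_of_mul_le_mul_right hle hx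

/-- `R` is the everywhere defined bounded inverse of `A + c`. -/
def IsResolvent (A : H →ₗ.[ℂ] H) (c : ℂ) (R : H →L[ℂ] H) : Prop :=
  ∀ h x, R h = x ↔ (x, h - c • x) ∈ A.graph

/-- The operator `A + c` on the graph of `A`. -/
def graphAddConst (A : H →ₗ.[ℂ] H) (c : ℂ) : A.graph →L[ℂ] H :=
  (ContinuousLinearMap.snd ℂ H H + c • ContinuousLinearMap.fst ℂ H H) ∘L A.graph.subtypeL

omit [CompleteSpace H] in
lemma graphAddConst_apply (p : A.graph) : graphAddConst A c p = p.1.2 + c • p.1.1 := rfl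

lemma antilipschitzWith_graphAddConst (hA : IsSelfAdjoint A) (hc : c.im ≠ 0) :
    ∃ K, AntilipschitzWith K (graphAddConst A c) := by
  have hpos : 0 < |c.im| := abs_pos.mpr hc
  refine ⟨⟨|c.im|⁻¹ + (1 + ‖c‖ * |c.im|⁻¹), by positivity⟩,
    (graphAddConst A c).antilipschitz_of_bound fun ⟨⟨x, y⟩, hp⟩ => ?_⟩
  rw [graphAddConst_apply]
  set z := y + c • x
  have hx : ‖x‖ ≤ |c.im|⁻¹ * ‖z‖ := (le_inv_mul_iff₀ hpos).mpr (norm_le_of_mem_graph hA hp c)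
  have hy : ‖y‖ ≤ ‖z‖ + ‖c‖ * ‖x‖ := by
    simpa [z, norm_smul] using norm_sub_le z (c • x)
  have hcx : ‖c‖ * ‖x‖ ≤ ‖c‖ * (|c.im|⁻¹ * ‖z‖) := by gcongr
  have hz : 0 ≤ ‖c‖ * (|c.im|⁻¹ * ‖z‖) := by positivity
  have hz' : 0 ≤ |c.im|⁻¹ * ‖z‖ := by positivity
  change max ‖x‖ ‖y‖ ≤ (|c.im|⁻¹ + (1 + ‖c‖ * |c.im|⁻¹)) * ‖z‖
  exact max_le (by linarith [norm_nonneg z]) (by linarith)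

lemma exists_isResolvent (hA : IsSelfAdjoint A) (hc : c.im ≠ 0) : ∃ R, IsResolvent A c R := by
  have : CompleteSpace A.graph := (IsSelfAdjoint.isClosed hA).completeSpace_coe
  obtain ⟨K, hanti⟩ := antilipschitzWith_graphAddConst hA hc
  have : CompleteSpace (graphAddConst A c).range :=
    (hanti.isClosed_range (graphAddConst A c).uniformContinuous).completeSpace_coe
  have hrange : (graphAddConst A c).range = ⊤ := by
    rw [← Submodule.orthogonal_eq_bot_iff, Submodule.eq_bot_iff]
    intro y hy
    have hmem : (y, -(starRingEnd ℂ c) • y) ∈ A.graph := by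
      rw [mem_graph_iff_forall_inner_eq hA]
      intro x' y' h
      have horth : ⟪y, y' + c • x'⟫_ℂ = 0 := inner_eq_zero_symm.mp (hy _ ⟨⟨(x', y'), h⟩, rfl⟩)
      rw [inner_add_right, inner_smul_right] at horth
      rw [inner_smul_left, map_neg, Complex.conj_conj]
      linear_combination -horth
    have hle := norm_le_of_mem_graph hA hmem (starRingEnd ℂ c)
    rw [neg_smul, neg_add_cancel, norm_zero, Complex.conj_im, abs_neg] at hle
    exact norm_le_zero_iff.mp (nonpos_of_mul_nonpos_right hle (abs_pos.mpr hc))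
  let e := ContinuousLinearEquiv.ofBijective (graphAddConst A c)
    (LinearMap.ker_eq_bot.mpr hanti.injective) hrange
  refine ⟨ContinuousLinearMap.fst ℂ H H ∘L A.graph.subtypeL ∘L e.symm, fun h x => ⟨?_, ?_⟩⟩
  · rintro rfl
    have he : (e.symm h).1.2 + c • (e.symm h).1.1 = h := e.apply_symm_apply h
    change ((e.symm h).1.1, h - c • (e.symm h).1.1) ∈ A.graph
    rw [← eq_sub_of_add_eq he]
    exact (e.symm h).2
  · intro hx
    have he : e ⟨_, hx⟩ = h := sub_add_cancel h (c • x)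
    exact congrArg (fun p : A.graph => p.1.1) (e.symm_apply_eq.mpr he.symm)

namespace IsResolvent

omit [CompleteSpace H] in
lemma apply_add_smul (hR : IsResolvent A c R) {x y : H} (h : (x, y) ∈ A.graph) :
    R (y + c • x) = x := (hR _ _).mpr (by simpa using h)

omit [CompleteSpace H] in
lemma mem_graph (hR : IsResolvent A c R) (h : H) : (R h, h - c • R h) ∈ A.graph :=
  (hR _ _).mp rfl

protected lemma star (hA : IsSelfAdjoint A) (hR : IsResolvent A c R) :
    IsResolvent A (starRingEnd ℂ c) (star R) := by
  intro h x
  have hinner : ∀ k, ⟪h - starRingEnd ℂ c • x, R k⟫_ℂ = ⟪x, k - c • R k⟫_ℂ ↔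
      ⟪star R h, k⟫_ℂ = ⟪x, k⟫_ℂ := fun k => by
    rw [ContinuousLinearMap.star_eq_adjoint, ContinuousLinearMap.adjoint_inner_left,
      inner_sub_left, inner_sub_right, inner_smul_left, inner_smul_right, Complex.conj_conj,
      sub_left_inj]
  rw [mem_graph_iff_forall_inner_eq hA]
  refine ⟨fun hx x' y' hxy => ?_, fun hx => ext_inner_right ℂ fun k =>
    (hinner k).mp (hx _ _ (hR.mem_graph k))⟩
  have h := (hinner (y' + c • x')).mpr (by rw [hx])
  rwa [hR.apply_add_smul hxy, add_sub_cancel_right] at h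

omit [CompleteSpace H] in
lemma sub_eq_smul_mul (hR : IsResolvent A c R) (hR' : IsResolvent A c' R') :
    R - R' = (c' - c) • (R * R') := by
  ext h
  have hc := hR.apply_add_smul (hR'.mem_graph h)
  rw [map_add, map_sub, map_smul, map_smul] at hc
  rw [sub_apply, smul_apply, mul_apply_eq_comp]
  linear_combination (norm := module) hc

lemma isStarNormal (hA : IsSelfAdjoint A) (hc : c.im ≠ 0) (hR : IsResolvent A c R) :
    IsStarNormal R := by
  have hne : c - starRingEnd ℂ c ≠ 0 := by
    rw [sub_ne_zero, ne_comm, Ne, Complex.conj_eq_iff_im]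
    exact hc
  have h₁ := hR.sub_eq_smul_mul (hR.star hA)
  have h₂ := (hR.star hA).sub_eq_smul_mul hR
  refine ⟨smul_right_injective _ hne ?_⟩
  linear_combination (norm := module) -h₁ - h₂

end IsResolvent

end Resolvent

section FunctionalCalculus

variable {A : H →ₗ.[ℂ] H} {R : H →L[ℂ] H}

/-- The function of `z = (l + i)⁻¹` which corresponds to the function `g` of the real variable `l`.
The point `z = 0` stands for `l = ∞`. -/
def resolventPullback (g : ℝ → ℂ) : ℂ → ℂ := Function.update (fun z => g z⁻¹.re) 0 0

lemma inv_im_eq_one_of_mem_spectrum [IsStarNormal R]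
    (hR : R - star R = (-2 * Complex.I) • (star R * R)) {z : ℂ} (hz : z ∈ spectrum ℂ R)
    (h₀ : z ≠ 0) : z⁻¹.im = 1 := by
  have hcfc : cfc (fun z : ℂ => z - star z) R =
      cfc (fun z : ℂ => (-2 * Complex.I) * (star z * z)) R := by
    rw [cfc_sub .., cfc_const_mul .., cfc_mul .., cfc_star .., cfc_id' ..]
    exact hR
  have him := congrArg Complex.im ((cfc_eq_cfc_iff_eqOn (a := R)).mp hcfc hz)
  simp only [Complex.star_def, Complex.sub_im, Complex.conj_im, ← Complex.normSq_eq_conj_mul_self,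
    Complex.mul_im, Complex.mul_re, Complex.neg_im, Complex.neg_re, Complex.re_ofNat,
    Complex.im_ofNat, Complex.I_im, Complex.I_re, Complex.ofReal_re, Complex.ofReal_im] at him
  rw [Complex.inv_im, div_eq_one_iff_eq (Complex.normSq_pos.mpr h₀).ne']
  linarith

lemma continuousOn_resolventPullback {s : Set ℂ} (hs : ∀ z ∈ s, z ≠ 0 → z⁻¹.im = 1)
    (g : C₀(ℝ, ℂ)) : ContinuousOn (resolventPullback g) s := by
  refine continuousOn_update_iff.mpr ⟨fun z hz => ContinuousAt.continuousWithinAt ?_, fun _ => ?_⟩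
  · exact g.continuous.continuousAt.comp
      (Complex.continuous_re.continuousAt.comp (continuousAt_inv₀ hz.2))
  · refine (g.zero_at_infty').comp ?_
    rw [← Metric.cobounded_eq_cocompact, ← tendsto_norm_atTop_iff_cobounded]
    have hinv : Tendsto (fun z : ℂ => ‖z⁻¹‖ - 1) (𝓝[s \ {0}] 0) atTop :=
      tendsto_atTop_add_const_right _ _ (tendsto_norm_atTop_iff_cobounded.mpr
        (tendsto_inv₀_nhdsNE_zero.mono_left (nhdsWithin_mono _ fun _ hz => hz.2)))
    refine tendsto_atTop_mono' _ ?_ hinv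
    filter_upwards [self_mem_nhdsWithin] with z hz
    have hle := Complex.norm_le_abs_re_add_abs_im z⁻¹
    rw [hs z hz.1 hz.2, abs_one] at hle
    exact sub_le_iff_le_add.mpr hle

lemma ofReal_add_I_ne_zero (l : ℝ) : (l : ℂ) + Complex.I ≠ 0 := fun h => by
  simpa using congrArg Complex.im h

/-- The function `l ↦ (l + i)⁻¹`. -/
def addIInv : C₀(ℝ, ℂ) where
  toFun l := (l + Complex.I)⁻¹
  continuous_toFun := Continuous.inv₀ (by fun_prop) ofReal_add_I_ne_zero
  zero_at_infty' := by
    refine tendsto_inv₀_cobounded.comp (tendsto_norm_atTop_iff_cobounded.mp ?_)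
    refine tendsto_atTop_mono (fun l => ?_) (tendsto_norm_cocompact_atTop (E := ℝ))
    simpa using Complex.abs_re_le_norm (l + Complex.I)

lemma addIInv_apply (l : ℝ) : addIInv l = (l + Complex.I)⁻¹ := rfl

/-- `Φ` is the functional calculus of the operator `A` for continuous functions vanishing at
infinity. -/
structure IsFunctionalCalculus (A : H →ₗ.[ℂ] H) (Φ : C₀(ℝ, ℂ) →⋆ₙₐ[ℂ] (H →L[ℂ] H)) : Prop where
  isResolvent : IsResolvent A Complex.I (Φ addIInv)
  commute : ∀ X, Commute X (Φ addIInv) → Commute X (star (Φ addIInv)) → ∀ g, Commute X (Φ g)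

lemma exists_starAlgHom_addIInv_eq [IsStarNormal R]
    (hR : R - star R = (-2 * Complex.I) • (star R * R)) :
    ∃ Φ : C₀(ℝ, ℂ) →⋆ₙₐ[ℂ] (H →L[ℂ] H), Φ addIInv = R ∧
      ∀ X, Commute X R → Commute X (star R) → ∀ g, Commute X (Φ g) := by
  have hspec : ∀ z ∈ spectrum ℂ R, z ≠ 0 → z⁻¹.im = 1 :=
    fun z => inv_im_eq_one_of_mem_spectrum hR
  have hc := continuousOn_resolventPullback hspec
  refine ⟨
    { toFun := fun g => cfc (resolventPullback g) R
      map_smul' := fun c g => ?_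
      map_zero' := ?_
      map_add' := fun g g' => ?_
      map_mul' := fun g g' => ?_
      map_star' := fun g => ?_ }, ?_, fun X hX hX' g => ?_⟩
  · rw [MonoidHom.id_apply, ← cfc_smul _ _ _ (hc g)]
    exact cfc_congr fun z _ => by by_cases h : z = 0 <;> simp [resolventPullback, h]
  · rw [← cfc_zero ℂ R]
    exact cfc_congr fun z _ => by by_cases h : z = 0 <;> simp [resolventPullback, h]
  · rw [← cfc_add _ _ _ (hc g) (hc g')]
    exact cfc_congr fun z _ => by by_cases h : z = 0 <;> simp [resolventPullback, h]
  · rw [← cfc_mul _ _ _ (hc g) (hc g')]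
    exact cfc_congr fun z _ => by by_cases h : z = 0 <;> simp [resolventPullback, h]
  · rw [← cfc_star]
    exact cfc_congr fun z _ => by by_cases h : z = 0 <;> simp [resolventPullback, h]
  · refine (cfc_congr fun z hz => ?_).trans (cfc_id' ℂ R)
    by_cases h : z = 0
    · simp [resolventPullback, h]
    · have hinv : (z⁻¹.re : ℂ) + Complex.I = z⁻¹ := by
        simpa [hspec z hz h] using Complex.re_add_im z⁻¹
      rw [resolventPullback, Function.update_of_ne h, addIInv_apply, hinv, inv_inv]
  · exact (hX.symm.cfc hX'.symm _).symm

theorem exists_isFunctionalCalculus (hA : IsSelfAdjoint A) :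
    ∃ Φ, IsFunctionalCalculus A Φ := by
  obtain ⟨R, hR⟩ := exists_isResolvent hA (c := Complex.I) (by simp)
  have := hR.isStarNormal hA (by simp)
  obtain ⟨Φ, rfl, hcomm⟩ := exists_starAlgHom_addIInv_eq (R := R) (by
    rw [star_comm_self']
    convert hR.sub_eq_smul_mul (hR.star hA) using 2
    rw [Complex.conj_I]; ring)
  exact ⟨Φ, hR, hcomm⟩

end FunctionalCalculus

section AbsSemigroup

variable {p q q' : ℝ → ℝ} {s t : ℝ}

/-- The real functions which are damped by `l ↦ exp (-t |l|)` to form elements of `C₀(ℝ, ℂ)`. -/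
structure IsWeight (q : ℝ → ℝ) : Prop where
  continuous : Continuous q
  abs_le : ∀ l, |q l| ≤ 1 + l ^ 2

lemma abs_pow_mul_exp_neg_le (n : ℕ) (ht : 0 < t) (l : ℝ) :
    |l| ^ n * Real.exp (-(t * |l|)) ≤ n.factorial / t ^ n := by
  have h := Real.pow_div_factorial_le_exp (t * |l|) (by positivity) n
  rw [div_le_iff₀ (by positivity), mul_pow] at h
  rw [Real.exp_neg, ← div_eq_mul_inv, div_le_div_iff₀ (Real.exp_pos _) (by positivity)]
  linarith

lemma exp_neg_mul_abs_le_one (ht : 0 ≤ t) (l : ℝ) : Real.exp (-(t * |l|)) ≤ 1 := by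
  rw [Real.exp_le_one_iff, neg_nonpos]
  positivity

namespace IsWeight

lemma one : IsWeight fun _ => 1 := ⟨continuous_const, fun l => by simp [sq_nonneg]⟩

lemma id : IsWeight fun l => l :=
  ⟨continuous_id, fun l => _root_.abs_le.mpr ⟨by nlinarith, by nlinarith⟩⟩

lemma abs : IsWeight fun l => |l| := ⟨continuous_abs, fun l => by simpa using id.abs_le l⟩

lemma sqrt_abs : IsWeight fun l => √|l| := ⟨by fun_prop, fun l => by
  rw [abs_of_nonneg (Real.sqrt_nonneg _), Real.sqrt_le_left (by positivity)]
  nlinarith [id.abs_le l, sq_nonneg l, sq_nonneg (l ^ 2)]⟩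

/-- The function `l ↦ q l * exp (-t |l|)`. -/
def expMul (hq : IsWeight q) (ht : 0 < t) : C₀(ℝ, ℂ) where
  toFun l := (q l * Real.exp (-(t * |l|)) : ℝ)
  continuous_toFun := by have := hq.continuous; fun_prop
  zero_at_infty' := by
    have hpow : ∀ n : ℕ, Tendsto (fun l : ℝ => |l| ^ n * Real.exp (-(t * |l|)))
        (cocompact ℝ) (𝓝 0) := fun n => by
      simpa [Function.comp_def] using (tendsto_rpow_mul_exp_neg_mul_atTop_nhds_zero n t ht).comp
        (tendsto_norm_cocompact_atTop (E := ℝ))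
    refine squeeze_zero_norm (fun l => ?_) (by simpa using (hpow 0).add (hpow 2))
    rw [Complex.norm_real, Real.norm_eq_abs, abs_mul, Real.abs_exp, ← one_add_mul]
    gcongr
    exact hq.abs_le l

lemma expMul_apply (hq : IsWeight q) (ht : 0 < t) (l : ℝ) :
    hq.expMul ht l = (q l * Real.exp (-(t * |l|)) : ℝ) := rfl

lemma expMul_mul_expMul (hq : IsWeight q) (hq' : IsWeight q') (hp : IsWeight p)
    (h : ∀ l, q l * q' l = p l) (hs : 0 < s) (ht : 0 < t) :
    hq.expMul hs * hq'.expMul ht = hp.expMul (add_pos hs ht) := by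
  ext l
  rw [ZeroAtInftyContinuousMap.mul_apply, expMul_apply, expMul_apply, expMul_apply, ← h, add_mul,
    neg_add, Real.exp_add]
  push_cast
  ring

lemma isSelfAdjoint_expMul (hq : IsWeight q) (ht : 0 < t) : IsSelfAdjoint (hq.expMul ht) := by
  ext l
  exact Complex.conj_ofReal _

end IsWeight

lemma abs_exp_neg_mul_sub_sub_le {x : ℝ} (ht : 0 < t) (h : |s - t| ≤ t / 2) :
    |Real.exp (-(s * |x|)) - Real.exp (-(t * |x|)) + (s - t) * (|x| * Real.exp (-(t * |x|)))| ≤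
      2 / (t / 2) ^ 2 * (s - t) ^ 2 := by
  set y := -((s - t) * |x|) with hy
  have hfactor : Real.exp (-(s * |x|)) = Real.exp (-(t * |x|)) * Real.exp y := by
    rw [← Real.exp_add]; congr 1; ring
  have htaylor : |Real.exp y - 1 - y| ≤ y ^ 2 * Real.exp |y| := by
    have h := Complex.norm_exp_sub_sum_le_norm_mul_exp y 2
    rw [Complex.norm_real, Real.norm_eq_abs, sq_abs] at h
    refine le_trans (le_of_eq ?_) h
    rw [← Real.norm_eq_abs, ← Complex.norm_real]
    simp [Finset.sum_range_succ, sub_sub]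
  have hyx : |y| ≤ t / 2 * |x| := by
    rw [hy, abs_neg, abs_mul, abs_abs]
    gcongr
  calc |Real.exp (-(s * |x|)) - Real.exp (-(t * |x|)) + (s - t) * (|x| * Real.exp (-(t * |x|)))|
      = |Real.exp (-(t * |x|)) * (Real.exp y - 1 - y)| := by rw [hfactor, hy]; congr 1; ring
    _ = Real.exp (-(t * |x|)) * |Real.exp y - 1 - y| := by rw [abs_mul, Real.abs_exp]
    _ ≤ Real.exp (-(t * |x|)) * (y ^ 2 * Real.exp (t / 2 * |x|)) := by
        gcongr
        exact htaylor.trans (by gcongr)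
    _ = |x| ^ 2 * Real.exp (-(t / 2 * |x|)) * (s - t) ^ 2 := by
        rw [mul_left_comm, ← Real.exp_add, hy]; ring_nf
    _ ≤ 2 / (t / 2) ^ 2 * (s - t) ^ 2 := by
        gcongr
        simpa using abs_pow_mul_exp_neg_le 2 (half_pos ht) x

variable (Φ : C₀(ℝ, ℂ) →⋆ₙₐ[ℂ] (H →L[ℂ] H))

lemma norm_map_le_of_forall_norm_le {g : C₀(ℝ, ℂ)} {C : ℝ} (hC : 0 ≤ C) (h : ∀ l, ‖g l‖ ≤ C) :
    ‖Φ g‖ ≤ C := by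
  refine (NonUnitalStarAlgHom.norm_apply_le Φ g).trans ?_
  rw [← ZeroAtInftyContinuousMap.norm_toBCF_eq_norm]
  exact (BoundedContinuousFunction.norm_le hC).mpr h

open scoped Classical in
/-- The semigroup `exp (-t |A|)`, where `Φ` is the functional calculus of `A`. -/
def absSemigroup (t : ℝ) : H →L[ℂ] H := if ht : 0 < t then Φ (IsWeight.one.expMul ht) else 1

lemma absSemigroup_of_pos (ht : 0 < t) : absSemigroup Φ t = Φ (IsWeight.one.expMul ht) := dif_pos ht

lemma absSemigroup_of_nonpos (ht : t ≤ 0) : absSemigroup Φ t = 1 := dif_neg ht.not_gt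

lemma hasDerivAt_absSemigroup (ht : 0 < t) :
    HasDerivAt (absSemigroup Φ) (-Φ (IsWeight.abs.expMul ht)) t := by
  have hO : (fun s => absSemigroup Φ s - absSemigroup Φ t - (s - t) • -Φ (IsWeight.abs.expMul ht))
      =O[𝓝 t] fun s => ‖s - t‖ ^ 2 := by
    refine Asymptotics.IsBigO.of_bound (2 / (t / 2) ^ 2) ?_
    filter_upwards [Metric.closedBall_mem_nhds t (half_pos ht)] with s hs
    rw [Metric.mem_closedBall, Real.dist_eq] at hs
    have hs₀ : 0 < s := by linarith [abs_le.mp hs]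
    rw [absSemigroup_of_pos Φ hs₀, absSemigroup_of_pos Φ ht, smul_neg, sub_neg_eq_add,
      ← Complex.coe_smul, ← map_smul, ← map_sub, ← map_add]
    refine norm_map_le_of_forall_norm_le Φ (by positivity) fun l => ?_
    rw [norm_pow, norm_norm, Real.norm_eq_abs, sq_abs]
    refine le_trans (le_of_eq ?_) (abs_exp_neg_mul_sub_sub_le ht hs (x := l))
    rw [← Real.norm_eq_abs, ← Complex.norm_real]
    simp [IsWeight.expMul_apply]
  exact hasDerivAt_iff_isLittleO.mpr
    (hO.trans_isLittleO (Asymptotics.isLittleO_pow_sub_sub t one_lt_two))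

lemma deriv_absSemigroup (ht : 0 < t) :
    deriv (absSemigroup Φ) t = -Φ (IsWeight.abs.expMul ht) := (hasDerivAt_absSemigroup Φ ht).deriv

lemma absSemigroup_add (hs : 0 < s) (ht : 0 < t) :
    absSemigroup Φ (s + t) = absSemigroup Φ s * absSemigroup Φ t := by
  rw [absSemigroup_of_pos Φ hs, absSemigroup_of_pos Φ ht, absSemigroup_of_pos Φ (add_pos hs ht),
    ← map_mul, IsWeight.one.expMul_mul_expMul IsWeight.one IsWeight.one (by simp)]

lemma norm_absSemigroup_le (t : ℝ) : ‖absSemigroup Φ t‖ ≤ 1 := by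
  rcases lt_or_ge 0 t with ht | ht
  · rw [absSemigroup_of_pos Φ ht]
    refine norm_map_le_of_forall_norm_le Φ zero_le_one fun l => ?_
    rw [IsWeight.expMul_apply, one_mul, Complex.norm_real, Real.norm_eq_abs, Real.abs_exp]
    exact exp_neg_mul_abs_le_one ht.le l
  · rw [absSemigroup_of_nonpos Φ ht]
    exact ContinuousLinearMap.norm_id_le

lemma norm_deriv_absSemigroup_le (ht : 0 < t) : ‖deriv (absSemigroup Φ) t‖ ≤ 1 / t := by
  rw [deriv_absSemigroup Φ ht, norm_neg]
  refine norm_map_le_of_forall_norm_le Φ (by positivity) fun l => ?_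
  rw [IsWeight.expMul_apply, Complex.norm_real, Real.norm_eq_abs, abs_mul, abs_abs, Real.abs_exp]
  simpa using abs_pow_mul_exp_neg_le 1 ht l

lemma isSelfAdjoint_absSemigroup (t : ℝ) : IsSelfAdjoint (absSemigroup Φ t) := by
  rcases lt_or_ge 0 t with ht | ht
  · rw [absSemigroup_of_pos Φ ht]
    exact (IsWeight.one.isSelfAdjoint_expMul ht).map Φ
  · rw [absSemigroup_of_nonpos Φ ht]
    exact .one _

lemma norm_absSemigroup_mul_sub_le (ht : 0 < t) :
    ‖absSemigroup Φ t * Φ addIInv - Φ addIInv‖ ≤ t := by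
  rw [absSemigroup_of_pos Φ ht, ← map_mul, ← map_sub]
  refine norm_map_le_of_forall_norm_le Φ ht.le fun l => ?_
  have hl : |l| ≤ ‖(l : ℂ) + Complex.I‖ := by
    simpa using Complex.abs_re_le_norm ((l : ℂ) + Complex.I)
  have hval : (IsWeight.one.expMul ht * addIInv - addIInv) l =
      ((Real.exp (-(t * |l|)) - 1 : ℝ) : ℂ) * ((l : ℂ) + Complex.I)⁻¹ := by
    rw [ZeroAtInftyContinuousMap.sub_apply, ZeroAtInftyContinuousMap.mul_apply,
      IsWeight.expMul_apply, one_mul, Complex.ofReal_sub, Complex.ofReal_one, sub_one_mul,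
      addIInv_apply]
  rw [hval, norm_mul, norm_inv, ← div_eq_mul_inv,
    div_le_iff₀ (norm_pos_iff.mpr (ofReal_add_I_ne_zero l)),
    Complex.norm_real, Real.norm_eq_abs, abs_sub_comm,
    abs_of_nonneg (sub_nonneg.mpr (exp_neg_mul_abs_le_one ht.le l))]
  calc 1 - Real.exp (-(t * |l|)) ≤ t * |l| := by linarith [Real.add_one_le_exp (-(t * |l|))]
    _ ≤ t * ‖(l : ℂ) + Complex.I‖ := by gcongr

namespace IsFunctionalCalculus

variable {Φ} {A : H →ₗ.[ℂ] H}

lemma denseRange_addIInv (hΦ : IsFunctionalCalculus A Φ) (hA : IsSelfAdjoint A) :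
    DenseRange (Φ addIInv) :=
  hA.dense_domain.mono fun x hx => ⟨_, hΦ.isResolvent.apply_add_smul (A.mem_graph ⟨x, hx⟩)⟩

lemma tendsto_absSemigroup_zero (hΦ : IsFunctionalCalculus A Φ) (hA : IsSelfAdjoint A) (h : H) :
    Tendsto (fun t => absSemigroup Φ t h) (𝓝[>] 0) (𝓝 h) := by
  have hequi : Equicontinuous fun t => (absSemigroup Φ t : H → H) :=
    (LipschitzWith.uniformEquicontinuous _ 1 fun t =>
      (absSemigroup Φ t).lipschitz.weaken (norm_absSemigroup_le Φ t)).equicontinuous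
  refine (hequi.isClosed_setOfPred_tendsto continuous_id (l := 𝓝[>] 0)).closure_subset_iff.mpr ?_
    (hΦ.denseRange_addIInv hA h)
  rintro _ ⟨k, rfl⟩
  refine tendsto_iff_norm_sub_tendsto_zero.mpr (squeeze_zero' (g := fun t : ℝ => t * ‖k‖)
    (.of_forall fun _ => norm_nonneg _) ?_ ?_)
  · filter_upwards [self_mem_nhdsWithin] with t ht
    exact (absSemigroup Φ t * Φ addIInv - Φ addIInv).le_of_opNorm_le
      (norm_absSemigroup_mul_sub_le Φ ht) k
  · exact ((continuous_id.mul continuous_const).tendsto' 0 0 (by simp)).mono_left nhdsWithin_le_nhds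

theorem isBoundedAnalyticSemigroup (hΦ : IsFunctionalCalculus A Φ) (hA : IsSelfAdjoint A) :
    IsBoundedAnalyticSemigroup 1 (absSemigroup Φ) where
  eq_one_of_nonpos _ := absSemigroup_of_nonpos Φ
  add _ _ := absSemigroup_add Φ
  tendsto_zero := hΦ.tendsto_absSemigroup_zero hA
  differentiableAt _ ht := (hasDerivAt_absSemigroup Φ ht).differentiableAt
  norm_le := norm_absSemigroup_le Φ
  norm_deriv_le _ := norm_deriv_absSemigroup_le Φ

end IsFunctionalCalculus

end AbsSemigroup

section PositiveProjection

lemma commute_starProjection_ker_orthogonal {T X : H →L[ℂ] H} (h : Commute X T)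
    (h' : Commute (star X) T) : Commute T.kerᗮ.starProjection X := by
  have hinv : ∀ Y : H →L[ℂ] H, Commute Y T → T.ker ∈ Module.End.invtSubmodule Y.toLinearMap := by
    intro Y hY v (hv : T v = 0)
    have hYT := congr($hY.eq v)
    rw [mul_apply_eq_comp, mul_apply_eq_comp, hv, map_zero] at hYT
    exact hYT.symm
  refine (ContinuousLinearMap.IsIdempotentElem.commute_iff
    (Submodule.isIdempotentElem_starProjection _)).mpr ⟨?_, ?_⟩
  · rw [Submodule.range_starProjection]
    exact ContinuousLinearMap.orthogonal_mem_invtSubmodule (hinv _ h')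
  · rw [Submodule.ker_starProjection, Submodule.orthogonal_orthogonal]
    exact hinv _ h

lemma mul_starProjection_ker_orthogonal_eq_zero {T N : H →L[ℂ] H} (hN : IsSelfAdjoint N)
    (h : T * N = 0) : N * T.kerᗮ.starProjection = 0 := by
  have hle : T.kerᗮ ≤ N.ker := by
    have hrange : N.range ≤ T.ker := by
      rintro _ ⟨v, rfl⟩
      exact congr($h v)
    refine (Submodule.orthogonal_le hrange).trans (le_of_eq ?_)
    rw [ContinuousLinearMap.orthogonal_range, ← ContinuousLinearMap.star_eq_adjoint, hN.star_eq]
  ext v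
  exact hle (Submodule.starProjection_apply_mem _ v)

variable (Φ : C₀(ℝ, ℂ) →⋆ₙₐ[ℂ] (H →L[ℂ] H))

/-- The spectral projection of `A` for the half line `(0, ∞)`, where `Φ` is the functional calculus
of `A`: the orthogonal projection onto the closure of the range of `(|A| + A) exp (-|A|)`. -/
def posProjection : H →L[ℂ] H :=
  (Φ (IsWeight.abs.expMul one_pos) + Φ (IsWeight.id.expMul one_pos)).kerᗮ.starProjection

lemma isIdempotentElem_posProjection : IsIdempotentElem (posProjection Φ) :=
  Submodule.isIdempotentElem_starProjection _

variable {Φ} {s t : ℝ}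

lemma commute_posProjection {X : H →L[ℂ] H} (hX : IsSelfAdjoint X) (h : ∀ g, Commute X (Φ g)) :
    Commute (posProjection Φ) X :=
  commute_starProjection_ker_orthogonal ((h _).add_right (h _))
    (by rw [hX.star_eq]; exact (h _).add_right (h _))

lemma commute_map_map (g g' : C₀(ℝ, ℂ)) : Commute (Φ g) (Φ g') := (Commute.all g g').map Φ

lemma commute_posProjection_expMul {q : ℝ → ℝ} (hq : IsWeight q) (ht : 0 < t) :
    Commute (posProjection Φ) (Φ (hq.expMul ht)) :=
  commute_posProjection ((hq.isSelfAdjoint_expMul ht).map Φ) (commute_map_map _)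

lemma commute_posProjection_absSemigroup (t : ℝ) :
    Commute (posProjection Φ) (absSemigroup Φ t) := by
  rcases lt_or_ge 0 t with ht | ht
  · rw [absSemigroup_of_pos Φ ht]
    exact commute_posProjection_expMul _ ht
  · rw [absSemigroup_of_nonpos Φ ht]
    exact .one_right _

lemma abs_add_id_mul_abs_sub_id (hs : 0 < s) (ht : 0 < t) :
    (IsWeight.abs.expMul hs + IsWeight.id.expMul hs) *
      (IsWeight.abs.expMul ht - IsWeight.id.expMul ht) = 0 := by
  ext l
  have hl : (|l| + l) * (|l| - l) = 0 := by linear_combination abs_mul_abs_self l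
  simp only [ZeroAtInftyContinuousMap.mul_apply, ZeroAtInftyContinuousMap.add_apply,
    ZeroAtInftyContinuousMap.sub_apply, ZeroAtInftyContinuousMap.zero_apply, IsWeight.expMul_apply]
  rw [← Complex.ofReal_add, ← Complex.ofReal_sub, ← Complex.ofReal_mul, ← add_mul, ← sub_mul,
    mul_mul_mul_comm, hl, zero_mul, Complex.ofReal_zero]

lemma map_abs_mul_posProjection (ht : 0 < t) :
    Φ (IsWeight.abs.expMul ht) * posProjection Φ = Φ (IsWeight.id.expMul ht) * posProjection Φ := by
  refine sub_eq_zero.mp ((sub_mul _ _ _).symm.trans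
    (mul_starProjection_ker_orthogonal_eq_zero ?_ ?_))
  · exact ((IsWeight.abs.isSelfAdjoint_expMul ht).map Φ).sub
      ((IsWeight.id.isSelfAdjoint_expMul ht).map Φ)
  · rw [← map_add, ← map_sub, ← map_mul, abs_add_id_mul_abs_sub_id, map_zero]

lemma mem_negGenerator_absSemigroup {v w : H} :
    (v, w) ∈ negGenerator (absSemigroup Φ) ↔
      ∀ t (ht : 0 < t), Φ (IsWeight.abs.expMul ht) v = absSemigroup Φ t w := by
  refine forall₂_congr fun t ht => ?_
  rw [deriv_absSemigroup Φ ht, neg_apply, neg_inj]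

omit [CompleteSpace H] in
lemma commute_sub_one_sub {Q X : H →L[ℂ] H} (h : Commute Q X) : Commute (Q - (1 - Q)) X :=
  h.sub_left ((Commute.one_left X).sub_left h)

lemma map_sqrt_abs_mul_self :
    Φ (IsWeight.sqrt_abs.expMul one_pos) * Φ (IsWeight.sqrt_abs.expMul one_pos) =
      Φ (IsWeight.abs.expMul (add_pos one_pos one_pos)) := by
  rw [← map_mul, IsWeight.sqrt_abs.expMul_mul_expMul IsWeight.sqrt_abs IsWeight.abs
    fun l => Real.mul_self_sqrt (abs_nonneg l)]

lemma addIInv_mul_id_add_I_smul_one (ht : 0 < t) :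
    addIInv * (IsWeight.id.expMul ht + Complex.I • IsWeight.one.expMul ht) =
      IsWeight.one.expMul ht := by
  ext l
  simp only [ZeroAtInftyContinuousMap.mul_apply, ZeroAtInftyContinuousMap.add_apply,
    ZeroAtInftyContinuousMap.smul_apply, IsWeight.expMul_apply, addIInv_apply, smul_eq_mul]
  rw [inv_mul_eq_iff_eq_mul₀ (ofReal_add_I_ne_zero l)]
  push_cast
  ring

namespace IsFunctionalCalculus

variable {A : H →ₗ.[ℂ] H} {v w : H}

lemma eq_zero_of_absSemigroup_apply (hΦ : IsFunctionalCalculus A Φ) (hA : IsSelfAdjoint A)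
    (ht : 0 < t) (hv : absSemigroup Φ t v = 0) : v = 0 := by
  have hhalf : ∀ s, 0 < s → absSemigroup Φ (s + s) v = 0 → absSemigroup Φ s v = 0 := by
    intro s hs h
    rw [absSemigroup_add Φ hs hs, mul_apply_eq_comp] at h
    rw [← inner_self_eq_zero (𝕜 := ℂ), ← ContinuousLinearMap.adjoint_inner_right,
      ← ContinuousLinearMap.star_eq_adjoint, (isSelfAdjoint_absSemigroup Φ s).star_eq, h,
      inner_zero_right]
  have hpow : ∀ n : ℕ, absSemigroup Φ (t * 2⁻¹ ^ n) v = 0 := fun n => by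
    induction n with
    | zero => simpa using hv
    | succ n ih => exact hhalf _ (by positivity) (by convert ih using 2; congr 1; ring)
  have hlim : Tendsto (fun n : ℕ => t * (2⁻¹ : ℝ) ^ n) atTop (𝓝[>] 0) :=
    tendsto_nhdsWithin_iff.mpr ⟨by simpa using (tendsto_pow_atTop_nhds_zero_of_lt_one
      (r := (2⁻¹ : ℝ)) (by norm_num) (by norm_num)).const_mul t, .of_forall fun n => by
        rw [mem_Ioi]; positivity⟩
  have hv := (hΦ.tendsto_absSemigroup_zero hA v).comp hlim
  simp only [Function.comp_def, hpow] at hv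
  exact tendsto_nhds_unique hv tendsto_const_nhds

lemma map_abs_mul_one_sub_posProjection (hΦ : IsFunctionalCalculus A Φ) (hA : IsSelfAdjoint A)
    (ht : 0 < t) : Φ (IsWeight.abs.expMul ht) * (1 - posProjection Φ) =
      -(Φ (IsWeight.id.expMul ht) * (1 - posProjection Φ)) := by
  set T : ∀ s, 0 < s → H →L[ℂ] H := fun s hs =>
    Φ (IsWeight.abs.expMul hs) + Φ (IsWeight.id.expMul hs) with hT
  have hswap : absSemigroup Φ 1 * T t ht = absSemigroup Φ t * T 1 one_pos := by
    rw [absSemigroup_of_pos Φ one_pos, absSemigroup_of_pos Φ ht, hT]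
    simp only [← map_add, ← map_mul]
    congr 1
    ext l
    simp only [ZeroAtInftyContinuousMap.mul_apply, ZeroAtInftyContinuousMap.add_apply,
      IsWeight.expMul_apply]
    push_cast
    ring
  have hker (v : H) : T 1 one_pos ((1 - posProjection Φ) v) = 0 := by
    have h := Submodule.sub_starProjection_mem_orthogonal (K := (T 1 one_pos).kerᗮ) v
    rwa [Submodule.orthogonal_orthogonal] at h
  refine eq_neg_of_add_eq_zero_left ?_
  rw [← add_mul]
  ext v
  refine hΦ.eq_zero_of_absSemigroup_apply hA one_pos ?_
  have h := congr($hswap ((1 - posProjection Φ) v))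
  rwa [mul_apply_eq_comp, mul_apply_eq_comp, hker, map_zero] at h

lemma map_abs_mul_sign (hΦ : IsFunctionalCalculus A Φ) (hA : IsSelfAdjoint A) (ht : 0 < t) :
    Φ (IsWeight.abs.expMul ht) * (posProjection Φ - (1 - posProjection Φ)) =
      Φ (IsWeight.id.expMul ht) := by
  rw [mul_sub, map_abs_mul_posProjection, hΦ.map_abs_mul_one_sub_posProjection hA]
  noncomm_ring

lemma map_addIInv_apply (ht : 0 < t) (h : H) :
    Φ addIInv (Φ (IsWeight.id.expMul ht) h + Complex.I • absSemigroup Φ t h) =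
      absSemigroup Φ t h := by
  have hmul := congr(Φ $(addIInv_mul_id_add_I_smul_one ht) h)
  rwa [map_mul, map_add, map_smul, ← absSemigroup_of_pos Φ ht] at hmul

lemma apply_mem_graph (hΦ : IsFunctionalCalculus A Φ) (ht : 0 < t) (h : H) :
    (absSemigroup Φ t h, Φ (IsWeight.id.expMul ht) h) ∈ A.graph := by
  have hmem := (hΦ.isResolvent _ _).mp (map_addIInv_apply ht h)
  rwa [add_sub_cancel_right] at hmem

lemma mem_graph_iff (hΦ : IsFunctionalCalculus A Φ) (hA : IsSelfAdjoint A) :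
    (v, w) ∈ A.graph ↔ ∀ t (ht : 0 < t), Φ (IsWeight.id.expMul ht) v = absSemigroup Φ t w := by
  refine ⟨fun h t ht => ?_, fun h => ?_⟩
  · have hv := hΦ.isResolvent.apply_add_smul h
    have hcomm (g : C₀(ℝ, ℂ)) (k : H) : Φ addIInv (Φ g k) = Φ g (Φ addIInv k) :=
      congr($((commute_map_map addIInv g).eq) k)
    have hkey := map_addIInv_apply (Φ := Φ) ht (w + Complex.I • v)
    rw [absSemigroup_of_pos Φ ht, ← map_smul, map_add, hcomm, hcomm, map_smul, hv, map_add,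
      map_smul, add_left_inj, ← absSemigroup_of_pos Φ ht] at hkey
    exact hkey
  · refine (IsSelfAdjoint.isClosed hA).mem_of_tendsto
      ((hΦ.tendsto_absSemigroup_zero hA v).prodMk_nhds (hΦ.tendsto_absSemigroup_zero hA w)) ?_
    filter_upwards [self_mem_nhdsWithin] with t ht
    exact h t ht ▸ hΦ.apply_mem_graph ht v

theorem isSpectralSplitting (hΦ : IsFunctionalCalculus A Φ) (hA : IsSelfAdjoint A) :
    IsSpectralSplitting A.graph (absSemigroup Φ) (posProjection Φ) where
  isIdempotentElem := isIdempotentElem_posProjection Φ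
  commute := commute_posProjection_absSemigroup
  mem_iff v w := by
    have hpos {t : ℝ} (ht : 0 < t) := congr($(map_abs_mul_posProjection (Φ := Φ) ht) v)
    have hneg {t : ℝ} (ht : 0 < t) := congr($(hΦ.map_abs_mul_one_sub_posProjection hA ht) v)
    simp only [mul_apply_eq_comp, neg_apply] at hpos hneg
    simp only [hΦ.mem_graph_iff hA, mem_negGenerator_absSemigroup]
    have hQN {t : ℝ} (ht : 0 < t) :=
      congr($((commute_posProjection_expMul (Φ := Φ) IsWeight.id ht).eq) v)
    have hQU (t : ℝ) := congr($((commute_posProjection_absSemigroup (Φ := Φ) t).eq) w)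
    simp only [mul_apply_eq_comp] at hQN hQU
    refine ⟨fun h => ⟨fun t ht => ?_, fun t ht => ?_⟩, fun h t ht => ?_⟩
    · rw [hpos ht, ← hQN, h t ht, hQU]
    · rw [hneg ht]
      simp only [sub_apply, one_apply_eq_self, map_sub, map_neg, ← hQN, ← hQU, h t ht]
    · have h₁ := h.1 t ht
      have h₂ := h.2 t ht
      rw [hpos ht] at h₁
      rw [hneg ht] at h₂
      simp only [sub_apply, one_apply_eq_self, map_sub, map_neg] at h₁ h₂
      linear_combination (norm := module) h₁ - h₂

lemma denseRange_map_sqrt_abs (hΦ : IsFunctionalCalculus A Φ) (hA : IsSelfAdjoint A)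
    (hker : ∀ x, (x, 0) ∈ A.graph → x = 0) :
    DenseRange (Φ (IsWeight.sqrt_abs.expMul one_pos)) := by
  set B := Φ (IsWeight.sqrt_abs.expMul one_pos)
  have hstar : star B = B := (IsWeight.sqrt_abs.isSelfAdjoint_expMul one_pos).map Φ
  have hdense : B.range.topologicalClosure = ⊤ := by
    rw [Submodule.topologicalClosure_eq_top_iff, ContinuousLinearMap.orthogonal_range,
      ← ContinuousLinearMap.star_eq_adjoint, hstar, Submodule.eq_bot_iff]
    intro v (hv : B v = 0)
    refine hΦ.eq_zero_of_absSemigroup_apply hA (add_pos one_pos one_pos) (hker _ ?_)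
    have habs : Φ (IsWeight.abs.expMul (add_pos one_pos one_pos)) v = 0 := by
      rw [← map_sqrt_abs_mul_self, mul_apply_eq_comp, hv, map_zero]
    have hid : Φ (IsWeight.id.expMul (add_pos one_pos one_pos)) v = 0 := by
      rw [← hΦ.map_abs_mul_sign hA, ← (commute_sub_one_sub (commute_posProjection_expMul _ _)).eq,
        mul_apply_eq_comp, habs, map_zero]
    exact hid ▸ hΦ.apply_mem_graph (add_pos one_pos one_pos) v
  exact Submodule.dense_iff_topologicalClosure_eq_top.mpr hdense

lemma commute_of_mem_graph (hΦ : IsFunctionalCalculus A Φ) {M : H →L[ℂ] H} (hM : IsSelfAdjoint M)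
    (hMA : ∀ x y, (x, y) ∈ A.graph → (M x, M y) ∈ A.graph) (g : C₀(ℝ, ℂ)) : Commute M (Φ g) := by
  have hcomm : Commute M (Φ addIInv) := by
    ext h
    have hmem := hΦ.isResolvent.apply_add_smul (hMA _ _ (hΦ.isResolvent.mem_graph h))
    rw [map_sub, map_smul, sub_add_cancel] at hmem
    exact hmem.symm
  refine hΦ.commute M hcomm ?_ g
  simpa only [hM.star_eq] using hcomm.star_star

theorem re_inner_mul_sign_nonneg (hΦ : IsFunctionalCalculus A Φ) (hA : IsSelfAdjoint A)
    (hker : ∀ x, (x, 0) ∈ A.graph → x = 0) {M : H →L[ℂ] H} (hM : IsSelfAdjoint M)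
    (hMA : ∀ x y, (x, y) ∈ A.graph → (M x, M y) ∈ A.graph)
    (hpos : ∀ x y, (x, y) ∈ A.graph → 0 ≤ (⟪M y, x⟫_ℂ).re) (k : H) :
    0 ≤ (⟪M ((posProjection Φ - (1 - posProjection Φ)) k), k⟫_ℂ).re := by
  set B := Φ (IsWeight.sqrt_abs.expMul one_pos)
  set σ := posProjection Φ - (1 - posProjection Φ)
  have hclosed : IsClosed {k : H | 0 ≤ (⟪M (σ k), k⟫_ℂ).re} :=
    isClosed_le continuous_const (Complex.continuous_re.comp
      (Continuous.inner (by fun_prop) (by fun_prop)))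
  refine hclosed.closure_subset_iff.mpr ?_ (hΦ.denseRange_map_sqrt_abs hA hker k)
  rintro _ ⟨h, rfl⟩
  have hMΦ := hΦ.commute_of_mem_graph hM hMA
  have hσΦ {q : ℝ → ℝ} (hq : IsWeight q) {t : ℝ} (ht : 0 < t) : Commute σ (Φ (hq.expMul ht)) :=
    commute_sub_one_sub (commute_posProjection_expMul hq ht)
  have hop : B * (M * σ) * B = absSemigroup Φ 1 * (M * Φ (IsWeight.id.expMul one_pos)) := by
    rw [← ((hMΦ _).mul_left (hσΦ IsWeight.sqrt_abs one_pos)).eq, mul_assoc, map_sqrt_abs_mul_self,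
      mul_assoc, (hσΦ _ _).eq, hΦ.map_abs_mul_sign hA, absSemigroup_of_pos Φ one_pos, ← mul_assoc,
      ← (hMΦ _).eq, mul_assoc, ← map_mul,
      IsWeight.one.expMul_mul_expMul IsWeight.id IsWeight.id one_mul]
  have hB : IsSelfAdjoint B := (IsWeight.sqrt_abs.isSelfAdjoint_expMul one_pos).map Φ
  have hinner : ⟪M (σ (B h)), B h⟫_ℂ =
      ⟪M (Φ (IsWeight.id.expMul one_pos) h), absSemigroup Φ 1 h⟫_ℂ :=
    calc _ = ⟪B (M (σ (B h))), h⟫_ℂ := (hB.isSymmetric _ _).symm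
      _ = ⟪absSemigroup Φ 1 (M (Φ (IsWeight.id.expMul one_pos) h)), h⟫_ℂ := congr(⟪$hop h, h⟫_ℂ)
      _ = _ := (isSelfAdjoint_absSemigroup Φ 1).isSymmetric _ _
  rw [Set.mem_ofPred_eq, hinner]
  exact hpos _ _ (hΦ.apply_mem_graph one_pos h)

end IsFunctionalCalculus

end PositiveProjection

section Similarity

variable {E F : Type*} [NormedAddCommGroup E] [NormedSpace ℂ E] [NormedAddCommGroup F]
  [NormedSpace ℂ F] {U : ℝ → E →L[ℂ] E} {M : ℝ}

lemma hasDerivAt_conj (T : E ≃L[ℂ] F) {t : ℝ} (hU : DifferentiableAt ℝ U t) :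
    HasDerivAt (fun t => T.conjContinuousAlgEquiv (U t))
      (T.conjContinuousAlgEquiv (deriv U t)) t :=
  (((T.arrowCongr T : (E →L[ℂ] E) →L[ℂ] (F →L[ℂ] F)).restrictScalars ℝ).hasFDerivAt
    (x := U t)).comp_hasDerivAt t hU.hasDerivAt

lemma norm_conj_le (T : E ≃L[ℂ] F) (X : E →L[ℂ] E) :
    ‖T.conjContinuousAlgEquiv X‖ ≤ ‖(T.arrowCongr T : (E →L[ℂ] E) →L[ℂ] (F →L[ℂ] F))‖ * ‖X‖ :=
  (T.arrowCongr T : (E →L[ℂ] E) →L[ℂ] (F →L[ℂ] F)).le_opNorm X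

lemma IsBoundedAnalyticSemigroup.conj (hU : IsBoundedAnalyticSemigroup M U) (T : E ≃L[ℂ] F) :
    IsBoundedAnalyticSemigroup (‖(T.arrowCongr T : (E →L[ℂ] E) →L[ℂ] (F →L[ℂ] F))‖ * M)
      (fun t => T.conjContinuousAlgEquiv (U t)) where
  eq_one_of_nonpos t ht := by rw [hU.eq_one_of_nonpos t ht, map_one]
  add s t hs ht := by rw [hU.add s t hs ht, map_mul]
  tendsto_zero h := by
    simpa [Function.comp_def] using (T.continuous.tendsto _).comp (hU.tendsto_zero (T.symm h))
  differentiableAt t ht := (hasDerivAt_conj T (hU.differentiableAt t ht)).differentiableAt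
  norm_le t := (norm_conj_le T _).trans (by gcongr; exact hU.norm_le t)
  norm_deriv_le t ht := by
    rw [(hasDerivAt_conj T (hU.differentiableAt t ht)).deriv, mul_div_assoc]
    exact (norm_conj_le T _).trans (by gcongr; exact hU.norm_deriv_le t ht)

lemma IsSpectralSplitting.conj {G : Submodule ℂ (E × E)} {G' : Submodule ℂ (F × F)} {Q : E →L[ℂ] E}
    (hQ : IsSpectralSplitting G U Q) (hU : IsBoundedAnalyticSemigroup M U) (T : E ≃L[ℂ] F)
    (hG : ∀ v w, (v, w) ∈ G' ↔ (T.symm v, T.symm w) ∈ G) :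
    IsSpectralSplitting G' (fun t => T.conjContinuousAlgEquiv (U t))
      (T.conjContinuousAlgEquiv Q) where
  isIdempotentElem := hQ.isIdempotentElem.map T.conjContinuousAlgEquiv
  commute t := (hQ.commute t).map T.conjContinuousAlgEquiv
  mem_iff v w := by
    have hmem (p q : E) : (T p, T q) ∈ negGenerator (fun t => T.conjContinuousAlgEquiv (U t)) ↔
        (p, q) ∈ negGenerator U := by
      refine forall₂_congr fun t ht => ?_
      rw [(hasDerivAt_conj T (hU.differentiableAt t ht)).deriv]
      simp [← map_neg]
    rw [hG, hQ.mem_iff, ← hmem, ← hmem]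
    simp

end Similarity

section SignatureOperator

variable {J Q : H →L[ℂ] H}

omit [CompleteSpace H] in
lemma isIdempotentElem_Pplus (hJ : J.comp J = .id ℂ H) : IsIdempotentElem (Pplus J) := by
  ext v
  have hJJ : J (J v) = v := congr($hJ v)
  simp only [Pplus, mul_apply_eq_comp, smul_apply, add_apply, ContinuousLinearMap.id_apply,
    map_smul, map_add, hJJ]
  module

omit [CompleteSpace H] in
lemma Pplus_apply_of_apply_eq {v : H} (hv : J v = v) : Pplus J v = v := by
  simp only [Pplus, smul_apply, add_apply, ContinuousLinearMap.id_apply, hv]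
  module

omit [CompleteSpace H] in
lemma halfRangeOperator_Pplus :
    halfRangeOperator (Pplus J) Q = (2⁻¹ : ℂ) • (1 + J * (Q - (1 - Q))) := by
  ext v
  simp only [halfRangeOperator, Pplus, add_apply, mul_apply_eq_comp, smul_apply, sub_apply,
    one_apply_eq_self, ContinuousLinearMap.id_apply, map_sub]
  module

lemma bijective_halfRangeOperator (h : ∀ v, 0 ≤ (⟪J ((Q - (1 - Q)) v), v⟫_ℂ).re) :
    Function.Bijective (halfRangeOperator (Pplus J) Q) := by
  refine ContinuousLinearMap.isUnit_iff_bijective.mp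
    (ContinuousLinearMap.isUnit_of_forall_le_norm_inner_map _ (c := 2⁻¹) (by norm_num) fun v => ?_)
  have hv : (⟪v, v⟫_ℂ).re = ‖v‖ ^ 2 := inner_self_eq_norm_sq (𝕜 := ℂ) v
  have hre : ‖v‖ ^ 2 ≤ ‖⟪v + J ((Q - (1 - Q)) v), v⟫_ℂ‖ := by
    refine le_trans ?_ (Complex.re_le_norm _)
    rw [inner_add_left, Complex.add_re, hv]
    exact le_add_of_nonneg_right (h v)
  rw [halfRangeOperator_Pplus, smul_apply, inner_smul_left, norm_mul, add_apply,
    one_apply_eq_self, mul_apply_eq_comp]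
  rw [Complex.norm_conj, show ‖(2⁻¹ : ℂ)‖ = 2⁻¹ by norm_num, NNReal.coe_inv, NNReal.coe_ofNat,
    mul_comm]
  gcongr

omit [CompleteSpace H] in
lemma mem_graph_pmapComp_iff {L : H →ₗ.[ℂ] H} (hJ : J.comp J = .id ℂ H) {v w : H} :
    (v, w) ∈ (pmapComp J L).graph ↔ (v, J w) ∈ L.graph := by
  have hJJ (w : H) : J (J w) = w := congr($hJ w)
  simp only [LinearPMap.mem_graph_iff]
  constructor
  · rintro ⟨y, rfl, rfl⟩
    exact ⟨y, rfl, (hJJ _).symm⟩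
  · rintro ⟨y, rfl, hy⟩
    exact ⟨y, rfl, (congrArg J hy).trans (hJJ w)⟩

end SignatureOperator

section UnboundedOperator

variable {B L : H →ₗ.[ℂ] H}

omit [CompleteSpace H] in
lemma IsPositivePMap.re_inner_nonneg (hL : IsPositivePMap L) {v w : H} (h : (v, w) ∈ L.graph) :
    0 ≤ (⟪w, v⟫_ℂ).re := by
  obtain ⟨u, rfl, rfl⟩ := (LinearPMap.mem_graph_iff L).mp h
  by_cases hu : (u : H) = 0
  · simp [hu]
  · exact (Complex.le_def.mp (hL u hu).le).1

omit [CompleteSpace H] in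
lemma IsPositivePMap.eq_zero_of_mem_graph (hL : IsPositivePMap L) {v : H} (h : (v, 0) ∈ L.graph) :
    v = 0 := by
  obtain ⟨u, rfl, hu⟩ := (LinearPMap.mem_graph_iff L).mp h
  by_contra hne
  simpa [show L u = 0 from hu] using hL u hne

lemma SimilarToSelfAdjoint.exists_mem_graph_iff (hB : SimilarToSelfAdjoint B) :
    ∃ (S : H ≃L[ℂ] H) (A : H →ₗ.[ℂ] H), IsSelfAdjoint A ∧
      ∀ v w, (v, w) ∈ B.graph ↔ (S v, S w) ∈ A.graph := by
  obtain ⟨S, A, hA, hdom, hS⟩ := hB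
  have hmem (u : B.domain) : S u ∈ A.domain := hdom.ge ⟨u, u.2, rfl⟩
  refine ⟨S, A, hA, fun v w => ?_⟩
  simp only [LinearPMap.mem_graph_iff]
  constructor
  · rintro ⟨u, rfl, rfl⟩
    exact ⟨⟨S u, hmem u⟩, rfl, hS u (hmem u)⟩
  · rintro ⟨⟨_, hSv⟩, rfl, hw⟩
    obtain ⟨u, hu, huv⟩ := hdom.le hSv
    obtain rfl : u = v := S.injective huv
    exact ⟨⟨u, hu⟩, rfl, S.injective ((hS ⟨u, hu⟩ hSv).symm.trans hw)⟩

omit [CompleteSpace H] in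
lemma isStrongSolutionOn_iff_solvesOn {f ψ : ℝ → H} {s : Set ℝ} :
    IsStrongSolutionOn B f ψ s ↔ SolvesOn B.graph f ψ s := by
  refine exists_congr fun ψ' => and_congr_right fun _ => forall₂_congr fun x _ =>
    and_congr_right fun _ => ?_
  simp only [LinearPMap.mem_graph_iff]
  constructor
  · rintro ⟨hx, h⟩
    exact ⟨⟨ψ x, hx⟩, rfl, by rw [h]; abel⟩
  · rintro ⟨⟨_, hx⟩, rfl, h⟩
    exact ⟨hx, by rw [h]; abel⟩

end UnboundedOperator

section Splitting

variable {J : H →L[ℂ] H} {L : H →ₗ.[ℂ] H}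

lemma inner_star_mul_mul_apply (J T : H →L[ℂ] H) (v w : H) :
    ⟪(star T * J * T) v, w⟫_ℂ = ⟪J (T v), T w⟫_ℂ := by
  rw [mul_apply_eq_comp, mul_apply_eq_comp, ContinuousLinearMap.star_eq_adjoint,
    ContinuousLinearMap.adjoint_inner_left]

lemma mem_graph_star_mul_mul {T : H →L[ℂ] H} {A : H →ₗ.[ℂ] H} (hA : IsSelfAdjoint A)
    (hL : IsSelfAdjoint L) (hJ : IsSelfAdjoint J)
    (hT : ∀ v w, (v, w) ∈ A.graph → (T v, J (T w)) ∈ L.graph) {v w : H} (h : (v, w) ∈ A.graph) :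
    ((star T * J * T) v, (star T * J * T) w) ∈ A.graph :=
  (mem_graph_iff_forall_inner_eq hA).mpr fun v' w' h' => by
    rw [inner_star_mul_mul_apply, inner_star_mul_mul_apply,
      (mem_graph_iff_forall_inner_eq hL).mp (hT v w h) _ _ (hT v' w' h')]
    exact (hJ.isSymmetric (T v) (T w')).symm

theorem SimilarToSelfAdjoint.exists_isSpectralSplitting (hJ : IsSignatureOperator J)
    (hL : IsSelfAdjoint L) (hpos : IsPositivePMap L) (hB : SimilarToSelfAdjoint (pmapComp J L)) :
    ∃ (M : ℝ) (U : ℝ → H →L[ℂ] H) (Q : H →L[ℂ] H), IsBoundedAnalyticSemigroup M U ∧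
      IsSpectralSplitting (pmapComp J L).graph U Q ∧
      Function.Bijective (halfRangeOperator (Pplus J) Q) := by
  obtain ⟨S, A, hA, hS⟩ := hB.exists_mem_graph_iff
  obtain ⟨Φ, hΦ⟩ := exists_isFunctionalCalculus hA
  have hU := hΦ.isBoundedAnalyticSemigroup hA
  refine ⟨_, _, _, hU.conj S.symm, (hΦ.isSpectralSplitting hA).conj hU S.symm (by simpa using hS),
    bijective_halfRangeOperator fun v => ?_⟩
  have hgraph (v w : H) : (v, w) ∈ A.graph ↔ (S.symm v, J (S.symm w)) ∈ L.graph := by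
    rw [← mem_graph_pmapComp_iff hJ.2, hS, S.apply_symm_apply, S.apply_symm_apply]
  let T : H →L[ℂ] H := S.symm
  have hker (v : H) (h : (v, 0) ∈ A.graph) : v = 0 := by
    have hSv : S.symm v = 0 :=
      hpos.eq_zero_of_mem_graph (by simpa only [map_zero] using (hgraph v 0).mp h)
    exact S.symm.map_eq_zero_iff.mp hSv
  -- `T* J T` is self-adjoint, and `T* J T A = T* L T` is symmetric and nonnegative.
  have := hΦ.re_inner_mul_sign_nonneg hA hker (hJ.1.conjugate' T)
    (fun v w => mem_graph_star_mul_mul hA hL hJ.1 fun v w => (hgraph v w).mp)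
    (fun v w h => by
      rw [inner_star_mul_mul_apply]
      exact hpos.re_inner_nonneg ((hgraph v w).mp h)) (S v)
  rw [inner_star_mul_mul_apply] at this
  simpa [T] using this

end Splitting

/-- Nonhomogeneous half-space problem: if `f` is locally Hölder continuous
on `[0, ∞)` and `∫₀^∞ ‖f(x)‖ dx < ∞`, then the problem `dψ/dx = -Bψ + f` on `(0, ∞)`,
`P₊ψ(0) = φ₊`, `‖ψ(x)‖ = O(1)` has a unique solution. -/
theorem statement6 (J : H →L[ℂ] H) (hJ : IsSignatureOperator J)
    (L : H →ₗ.[ℂ] H) (hdense : Dense (L.domain : Set H))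
    (hLsa : IsSelfAdjoint L) (hLpos : IsPositivePMap L)
    (hsim : SimilarToSelfAdjoint (pmapComp J L))
    (f : ℝ → H)
    (hf : ∀ x₁ > (0 : ℝ), ∃ K > (0 : ℝ), ∃ k ∈ Set.Ioc (0 : ℝ) 1,
      ∀ x ∈ Set.Icc (0 : ℝ) x₁, ∀ y ∈ Set.Icc (0 : ℝ) x₁, ‖f x - f y‖ ≤ K * |x - y| ^ k)
    (hfint : IntegrableOn (fun x => ‖f x‖) (Set.Ici (0 : ℝ)) volume)
    (φp : H) (hφp : J φp = φp) :
    (∃ ψ : ℝ → H,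
        ContinuousOn ψ (Set.Ici 0) ∧
        IsStrongSolutionOn (pmapComp J L) f ψ (Set.Ioi 0) ∧
        Pplus J (ψ 0) = φp ∧
        (∃ C : ℝ, ∀ x ∈ Set.Ici (0 : ℝ), ‖ψ x‖ ≤ C)) ∧
    (∀ ψ₁ ψ₂ : ℝ → H,
        (ContinuousOn ψ₁ (Set.Ici 0) ∧
          IsStrongSolutionOn (pmapComp J L) f ψ₁ (Set.Ioi 0) ∧
          Pplus J (ψ₁ 0) = φp ∧
          (∃ C : ℝ, ∀ x ∈ Set.Ici (0 : ℝ), ‖ψ₁ x‖ ≤ C)) →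
        (ContinuousOn ψ₂ (Set.Ici 0) ∧
          IsStrongSolutionOn (pmapComp J L) f ψ₂ (Set.Ioi 0) ∧
          Pplus J (ψ₂ 0) = φp ∧
          (∃ C : ℝ, ∀ x ∈ Set.Ici (0 : ℝ), ‖ψ₂ x‖ ≤ C)) →
        Set.EqOn ψ₁ ψ₂ (Set.Ici 0)) := by
  obtain ⟨M, U, Q, hU, hQ, hbij⟩ := hsim.exists_isSpectralSplitting hJ hLsa hLpos
  simp only [isStrongSolutionOn_iff_solvesOn]
  have hholder := isLocallyHolder_of_norm_sub_le fun X hX =>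
    let ⟨K, _, k, hk, hle⟩ := hf X hX; ⟨K, k, hk.1, hle⟩
  constructor
  · have hmeas : AEStronglyMeasurable f (volume.restrict (Set.Ioi 0)) :=
      (hholder.continuousOn.mono Set.Ioi_subset_Ici_self).aestronglyMeasurable measurableSet_Ioi
    exact hQ.exists_isBoundedSolution hU (isIdempotentElem_Pplus hJ.2) hbij.surjective
      ((integrable_norm_iff hmeas).mp (hfint.mono_set Set.Ioi_subset_Ici_self)) hholder
      (Pplus_apply_of_apply_eq hφp)
  · intro ψ₁ ψ₂ (h₁ : IsBoundedSolution _ _ _ f ψ₁) (h₂ : IsBoundedSolution _ _ _ f ψ₂) x hx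
    refine sub_eq_zero.mp (hQ.eqOn_zero hU hbij.injective (fun v hv => ?_) (h₁.sub h₂) hx)
    exact hLpos.eq_zero_of_mem_graph (by simpa using (mem_graph_pmapComp_iff hJ.2).mp hv)

end
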